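/- arXiv:2007.08079 — 3 statements merged into one kernel-verified Lean document; each statement's English description precedes it below -/
import Mathlib

section
/- Let E₁ and E₂ be ellipsoids in ℝⁿ, n ≥ 2, centered at the origin, with semiaxes a₁,…,aₙ > 0 and b₁,…,bₙ > 0 respectively. If Ṽ_i(E₁) = Ṽ_i(E₂) for every integer i = 1, 2, …, n, then E₁ and E₂ are congruent; equivalently, the multisets {a₁,…,aₙ} and {b₁,…,bₙ} coincide. -/
open MeasureTheory Real Set

/-- The spherical Lebesgue measure on the unit sphere `S^{n-1} ⊆ ℝⁿ`. -/
noncomputable def sphereMeasure (n : ℕ) :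
    Measure (Metric.sphere (0 : EuclideanSpace ℝ (Fin n)) 1) :=
  (volume : Measure (EuclideanSpace ℝ (Fin n))).toSphere

/-- The radial function of a set `K`, evaluated at `x`:
`ρ_K(x) = max {t ≥ 0 : t • x ∈ K}`. -/
noncomputable def radial {n : ℕ} (K : Set (EuclideanSpace ℝ (Fin n)))
    (x : EuclideanSpace ℝ (Fin n)) : ℝ :=
  sSup {t : ℝ | 0 ≤ t ∧ t • x ∈ K}

/-- The `i`-th dual volume `Ṽ_i(K) = (1/n) ∫_{S^{n-1}} ρ_K(θ)^i dθ`. -/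
noncomputable def dualVolume (n : ℕ) (i : ℝ) (K : Set (EuclideanSpace ℝ (Fin n))) : ℝ :=
  (1 / n) * ∫ θ : Metric.sphere (0 : EuclideanSpace ℝ (Fin n)) 1,
    radial K (θ : EuclideanSpace ℝ (Fin n)) ^ i ∂(sphereMeasure n)

/-- The axis-parallel centered ellipsoid with semiaxes `a`:
`{x : x₁²/a₁² + ⋯ + xₙ²/aₙ² ≤ 1}`. -/
def ellipsoidSet {n : ℕ} (a : Fin n → ℝ) : Set (EuclideanSpace ℝ (Fin n)) :=
  {x | ∑ j, (x j) ^ 2 / (a j) ^ 2 ≤ 1}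

/-!
Let `P_a = ∏ⱼ (X + aⱼ²)`. If `ρ` is the radial function of the ellipsoid `E` with semiaxes `a`, then
on the unit sphere `1 + s² ρ⁻²` is the squared gauge of another ellipsoid, so that integrating
its power `-n / 2` over the sphere gives, up to a constant, the volume of that ellipsoid, which is
proportional to `∏ⱼ aⱼ / √(P_a(s²))`. Multiplied by `s ^ k` and integrated over `s > 0`, the
spherical integral becomes a multiple of `∫ ρ ^ (k + 1)`. Hence the dual volumes
`Ṽ_1, …, Ṽ_{n-1}` of `E`, together with its volume `Ṽ_n`, determine the moments of order at most
`n - 2` of `s ↦ 1 / √(P_a(s²))`.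

If `E` and the ellipsoid with semiaxes `b` have the same dual volumes, then `P_a - P_b = X R` with
`deg R ≤ n - 2`. The sign of `1 / √(P_b(s²)) - 1 / √(P_a(s²))` is that of `R(s²)`, which can be
corrected by a polynomial multiplier in `s` of degree at most `deg R`. As all the moments involved
vanish, `R = 0`.
-/

section Polar

open Metric Module
open scoped Pointwise

lemma measureReal_ball_pos {X : Type*} [PseudoMetricSpace X] [ProperSpace X] [MeasurableSpace X]
    (μ : Measure X) [μ.IsOpenPosMeasure] [IsFiniteMeasureOnCompacts μ] (x : X) {r : ℝ}
    (hr : 0 < r) : 0 < μ.real (ball x r) :=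
  ENNReal.toReal_pos (measure_ball_pos μ x hr).ne' measure_ball_lt_top.ne

variable {E F : Type*} [NormedAddCommGroup E] [NormedSpace ℝ E] [NormedAddCommGroup F]
  [NormedSpace ℝ F]

/-- The homeomorphism between unit spheres induced by a linear isometry equivalence. -/
def unitSphereHomeomorph (T : E ≃ₗᵢ[ℝ] F) : sphere (0 : E) 1 ≃ₜ sphere (0 : F) 1 :=
  T.toHomeomorph.subtype fun x => by simp

variable [MeasurableSpace E] [BorelSpace E]

lemma measurePreserving_unitSphereHomeomorph [MeasurableSpace F] [BorelSpace F] {μ : Measure E}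
    {ν : Measure F} (T : E ≃ₗᵢ[ℝ] F) (hT : MeasurePreserving T μ ν) :
    MeasurePreserving (unitSphereHomeomorph T) μ.toSphere ν.toSphere := by
  refine ⟨(unitSphereHomeomorph T).measurable, Measure.ext fun s hs => ?_⟩
  have hcone : Ioo (0 : ℝ) 1 • ((↑) '' (unitSphereHomeomorph T ⁻¹' s) : Set E) =
      T ⁻¹' (Ioo (0 : ℝ) 1 • ((↑) '' s : Set F)) := by
    ext x
    constructor
    · rintro ⟨r, hr, -, ⟨θ, hθ, rfl⟩, rfl⟩
      exact ⟨r, hr, T θ, ⟨_, hθ, rfl⟩, (map_smul T r (θ : E)).symm⟩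
    · rintro ⟨r, hr, -, ⟨θ, hθ, rfl⟩, hx⟩
      refine ⟨r, hr, _, ⟨(unitSphereHomeomorph T).symm θ, by simpa using hθ, rfl⟩, ?_⟩
      apply T.injective
      rw [← hx]
      exact (map_smul T r _).trans (congrArg (r • ·) (T.apply_symm_apply θ))
  have hsm : MeasurableSet (unitSphereHomeomorph T ⁻¹' s) :=
    (unitSphereHomeomorph T).measurable hs
  rw [Measure.map_apply (unitSphereHomeomorph T).measurable hs, μ.toSphere_apply' hsm,
    ν.toSphere_apply' hs, hcone, hT.measure_preimage_emb T.toHomeomorph.measurableEmbedding,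
    T.toLinearEquiv.finrank_eq]

variable [FiniteDimensional ℝ E] (μ : Measure E) [μ.IsAddHaarMeasure]

lemma integrable_toSphere_norm_map_inv_pow {A : E →ₗ[ℝ] F} (hA : Function.Injective A) (i : ℕ) :
    Integrable (fun θ : sphere (0 : E) 1 => ‖A θ‖⁻¹ ^ i) μ.toSphere := by
  have hcont : Continuous fun θ : sphere (0 : E) 1 => ‖A θ‖ :=
    (A.continuous_of_finiteDimensional.comp continuous_subtype_val).norm
  have hne (θ : sphere (0 : E) 1) : ‖A θ‖ ≠ 0 :=
    norm_ne_zero_iff.2 <| (map_ne_zero_iff A hA).2 (ne_zero_of_mem_unit_sphere θ)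
  exact ((hcont.inv₀ hne).pow i).integrable_of_hasCompactSupport (.of_compactSpace _)

variable [Nontrivial E]

lemma addHaar_setOf_lt_one_eq_lintegral_toSphere {N : E → ℝ} (hN : Measurable N)
    (hpos : ∀ x, x ≠ 0 → 0 < N x) (hsmul : ∀ r : ℝ, 0 < r → ∀ x, N (r • x) = r * N x) :
    μ {x | N x < 1} =
      ∫⁻ θ : sphere (0 : E) 1, ENNReal.ofReal ((N θ)⁻¹ ^ finrank ℝ E / finrank ℝ E)
        ∂μ.toSphere := by
  have hS : MeasurableSet {x | N x < 1} := measurableSet_lt hN measurable_const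
  let polar := (homeomorphUnitSphereProd E).symm.toMeasurableEquiv
  have hpolar : MeasurePreserving polar
      (μ.toSphere.prod (.volumeIoiPow (finrank ℝ E - 1))) (μ.comap (↑)) :=
    μ.measurePreserving_homeomorphUnitSphereProd.symm
      (homeomorphUnitSphereProd E).toMeasurableEquiv
  have hray (θ : sphere (0 : E) 1) :
      Prod.mk θ ⁻¹' (polar ⁻¹' ((↑) ⁻¹' {x | N x < 1})) =
        Iio ⟨(N θ)⁻¹, inv_pos.2 (hpos θ (ne_zero_of_mem_unit_sphere θ))⟩ := by
    ext r
    change N ((r : ℝ) • (θ : E)) < 1 ↔ (r : ℝ) < (N θ)⁻¹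
    rw [hsmul r r.2, lt_inv_comm₀ r.2 (hpos θ (ne_zero_of_mem_unit_sphere θ)),
      ← one_div, lt_div_iff₀' r.2]
  have hdim : finrank ℝ E - 1 + 1 = finrank ℝ E := Nat.sub_add_cancel finrank_pos
  calc μ {x | N x < 1}
      = μ.comap (↑) ((↑) ⁻¹' {x | N x < 1} : Set ({0}ᶜ : Set E)) := by
        rw [comap_subtype_coe_apply (measurableSet_singleton _).compl,
          Subtype.image_preimage_coe, Set.inter_comm, ← Measure.restrict_apply hS,
          restrict_compl_singleton]
    _ = μ.toSphere.prod (.volumeIoiPow (finrank ℝ E - 1))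
          (polar ⁻¹' ((↑) ⁻¹' {x | N x < 1})) :=
        (hpolar.measure_preimage_equiv _).symm
    _ = ∫⁻ θ : sphere (0 : E) 1, ENNReal.ofReal ((N θ)⁻¹ ^ finrank ℝ E / finrank ℝ E)
          ∂μ.toSphere := by
        rw [Measure.prod_apply (polar.measurable (measurable_subtype_coe hS))]
        refine lintegral_congr fun θ => ?_
        rw [hray, Measure.volumeIoiPow_apply_Iio, ← Nat.cast_add_one, hdim]

lemma integral_toSphere_inv_pow_finrank {N : E → ℝ} (hN : Measurable N)
    (hpos : ∀ x, x ≠ 0 → 0 < N x) (hsmul : ∀ r : ℝ, 0 < r → ∀ x, N (r • x) = r * N x) :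
    ∫ θ : sphere (0 : E) 1, (N θ)⁻¹ ^ finrank ℝ E ∂μ.toSphere =
      finrank ℝ E * μ.real {x | N x < 1} := by
  have hdim : (finrank ℝ E : ℝ) ≠ 0 := Nat.cast_ne_zero.2 finrank_pos.ne'
  have hnonneg (θ : sphere (0 : E) 1) : 0 ≤ (N θ)⁻¹ ^ finrank ℝ E / finrank ℝ E :=
    have := hpos θ (ne_zero_of_mem_unit_sphere θ)
    by positivity
  rw [Measure.real, addHaar_setOf_lt_one_eq_lintegral_toSphere μ hN hpos hsmul,
    ← integral_eq_lintegral_of_nonneg_ae (.of_forall hnonneg)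
      (((hN.comp measurable_subtype_coe).inv.pow_const _).div_const _).aestronglyMeasurable,
    integral_div, mul_div_cancel₀ _ hdim]

lemma integral_toSphere_norm_map_inv_pow_finrank {A : E →ₗ[ℝ] E} (hA : LinearMap.det A ≠ 0) :
    ∫ θ : sphere (0 : E) 1, ‖A θ‖⁻¹ ^ finrank ℝ E ∂μ.toSphere =
      finrank ℝ E * (|LinearMap.det A|⁻¹ * μ.real (ball 0 1)) := by
  rw [integral_toSphere_inv_pow_finrank μ (N := fun x => ‖A x‖)
    A.continuous_of_finiteDimensional.norm.measurable
    (fun x hx => norm_pos_iff.2 <| (A.equivOfDetNeZero hA).map_ne_zero_iff.2 hx)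
    (fun r hr x => by rw [map_smul, norm_smul, Real.norm_of_nonneg hr.le])]
  have hball : {x | ‖A x‖ < 1} = A ⁻¹' ball 0 1 := by ext x; simp
  rw [hball, Measure.real, Measure.addHaar_preimage_linearMap μ hA, ENNReal.toReal_mul,
    ENNReal.toReal_ofReal (abs_nonneg _), abs_inv, Measure.real]

end Polar

section Mellin

lemma integrableOn_Ioi_pow_mul_comp_mul_right {f : ℝ → ℝ} {k : ℕ} {b : ℝ} (hb : 0 < b)
    (hf : IntegrableOn (fun u => u ^ k * f u) (Ioi 0)) :
    IntegrableOn (fun s => s ^ k * f (s * b)) (Ioi 0) := by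
  have := (integrableOn_Ioi_comp_mul_right_iff (fun u => u ^ k * f u) 0 hb).2 (by simpa using hf)
  refine IntegrableOn.congr_fun (this.const_mul (b ^ k)⁻¹) (fun s _ => ?_) measurableSet_Ioi
  simp only [mul_pow]
  field_simp

lemma integral_Ioi_pow_mul_comp_mul_right (f : ℝ → ℝ) (k : ℕ) {b : ℝ} (hb : 0 < b) :
    ∫ s in Ioi (0 : ℝ), s ^ k * f (s * b) = b⁻¹ ^ (k + 1) * ∫ u in Ioi (0 : ℝ), u ^ k * f u := by
  have := integral_comp_mul_right_Ioi (fun u => u ^ k * f u) 0 hb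
  simp only [zero_mul, smul_eq_mul, mul_pow, mul_right_comm _ (b ^ k), integral_mul_const] at this
  rw [pow_succ, mul_assoc, ← this, inv_pow, mul_comm, mul_inv_cancel_right₀ (pow_pos hb k).ne']

variable {X : Type*} [MeasurableSpace X] {ν : Measure X} {g : X → ℝ} {f : ℝ → ℝ} {k : ℕ}

lemma integrable_prod_pow_mul_comp_mul (hg : Measurable g) (hgpos : ∀ x, 0 < g x)
    (hgint : Integrable (fun x => (g x)⁻¹ ^ (k + 1)) ν) (hf : Measurable f)
    (hfint : IntegrableOn (fun u => u ^ k * f u) (Ioi 0)) :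
    Integrable (fun p : X × ℝ => p.2 ^ k * f (p.2 * g p.1)) (ν.prod (volume.restrict (Ioi 0))) := by
  rw [integrable_prod_iff (by fun_prop)]
  refine ⟨.of_forall fun x => integrableOn_Ioi_pow_mul_comp_mul_right (hgpos x) hfint, ?_⟩
  refine (hgint.mul_const (∫ u in Ioi (0 : ℝ), u ^ k * |f u|)).congr (.of_forall fun x => ?_)
  dsimp only
  rw [← integral_Ioi_pow_mul_comp_mul_right (fun u => |f u|) k (hgpos x)]
  refine setIntegral_congr_fun measurableSet_Ioi fun s hs => ?_
  rw [norm_mul, Real.norm_of_nonneg (pow_nonneg (mem_Ioi.1 hs).le k), Real.norm_eq_abs]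

lemma integral_Ioi_pow_mul_integral_comp_mul [SFinite ν] (hg : ∀ x, 0 < g x)
    (hint : Integrable (fun p : X × ℝ => p.2 ^ k * f (p.2 * g p.1))
      (ν.prod (volume.restrict (Ioi 0)))) :
    ∫ s in Ioi (0 : ℝ), s ^ k * ∫ x, f (s * g x) ∂ν =
      (∫ x, (g x)⁻¹ ^ (k + 1) ∂ν) * ∫ u in Ioi (0 : ℝ), u ^ k * f u := by
  calc ∫ s in Ioi (0 : ℝ), s ^ k * ∫ x, f (s * g x) ∂ν
      = ∫ s in Ioi (0 : ℝ), ∫ x, s ^ k * f (s * g x) ∂ν := by simp only [integral_const_mul]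
    _ = ∫ x, (∫ s in Ioi (0 : ℝ), s ^ k * f (s * g x)) ∂ν :=
        (integral_integral_swap (f := fun x s => s ^ k * f (s * g x)) hint).symm
    _ = (∫ x, (g x)⁻¹ ^ (k + 1) ∂ν) * ∫ u in Ioi (0 : ℝ), u ^ k * f u := by
        simp only [integral_Ioi_pow_mul_comp_mul_right f k (hg _), integral_mul_const]

lemma integrableOn_Ioi_pow_mul_inv_sqrt_one_add_sq_pow {k n : ℕ} (hk : k + 2 ≤ n) :
    IntegrableOn (fun u : ℝ => u ^ k * (√(1 + u ^ 2))⁻¹ ^ n) (Ioi 0) := by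
  refine integrable_inv_one_add_sq.integrableOn.mono' (by fun_prop) (.of_forall fun u => ?_)
  have hone : 1 ≤ √(1 + u ^ 2) := Real.one_le_sqrt.2 (le_add_of_nonneg_right (sq_nonneg u))
  have habs : |u| ≤ √(1 + u ^ 2) := Real.abs_le_sqrt (le_add_of_nonneg_left zero_le_one)
  have hpos : 0 < √(1 + u ^ 2) := one_pos.trans_le hone
  have hsq : 1 + u ^ 2 = √(1 + u ^ 2) ^ 2 := (Real.sq_sqrt (by positivity)).symm
  calc ‖u ^ k * (√(1 + u ^ 2))⁻¹ ^ n‖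
      = |u| ^ k * (√(1 + u ^ 2))⁻¹ ^ n := by
        rw [norm_mul, norm_pow, Real.norm_eq_abs, Real.norm_of_nonneg (by positivity)]
    _ ≤ √(1 + u ^ 2) ^ k * (√(1 + u ^ 2))⁻¹ ^ (k + 2) :=
        mul_le_mul (pow_le_pow_left₀ (abs_nonneg u) habs k)
          (pow_le_pow_of_le_one (by positivity) (inv_le_one_of_one_le₀ hone) hk)
          (by positivity) (by positivity)
    _ = (1 + u ^ 2)⁻¹ := by
        rw [pow_add, ← mul_assoc, ← mul_pow, mul_inv_cancel₀ hpos.ne', one_pow, one_mul, inv_pow,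
          ← hsq]

end Mellin

section Moments

open Polynomial

lemma mul_nonneg_of_isPreconnected_of_ne_zero {X : Type*} [TopologicalSpace X] {f : X → ℝ}
    {s : Set X} (hs : IsPreconnected s) (hf : ContinuousOn f s) (h0 : ∀ x ∈ s, f x ≠ 0) {x y : X}
    (hx : x ∈ s) (hy : y ∈ s) : 0 ≤ f x * f y := by
  by_contra! hneg
  obtain ⟨z, hz, hfz⟩ : ∃ z ∈ s, f z = 0 := by
    rcases mul_neg_iff.1 hneg with ⟨hfx, hfy⟩ | ⟨hfx, hfy⟩
    · exact hs.intermediate_value₂ hy hx hf continuousOn_const hfy.le hfx.le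
    · exact hs.intermediate_value₂ hx hy hf continuousOn_const hfx.le hfy.le
  exact h0 z hz hfz

lemma exists_eval_mul_eval_sq_nonneg {R : ℝ[X]} (hR : R ≠ 0) :
    ∃ P : ℝ[X], P ≠ 0 ∧ P.natDegree ≤ R.natDegree ∧
      ∀ s : ℝ, 0 < s → 0 ≤ P.eval s * R.eval (s ^ 2) := by
  induction hd : R.natDegree generalizing R with
  | zero =>
    obtain ⟨c, rfl⟩ := natDegree_eq_zero.1 hd
    exact ⟨C c, hR, by simp, fun s _ => by simpa using mul_self_nonneg c⟩
  | succ d ih =>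
    by_cases hroots : ∀ r ∈ Ioi (0 : ℝ), R.eval r ≠ 0
    · refine ⟨C (R.eval 1), by simpa using hroots 1 (mem_Ioi.2 one_pos), by simp, fun s hs => ?_⟩
      rw [eval_C]
      exact mul_nonneg_of_isPreconnected_of_ne_zero isPreconnected_Ioi R.continuousOn hroots
        (mem_Ioi.2 one_pos) (mem_Ioi.2 (pow_pos hs 2))
    · -- A root `r` of `R` is compensated by the factor `X - √r` of `P`.
      push Not at hroots
      obtain ⟨r, hr, hroot⟩ := hroots
      obtain ⟨Q, rfl⟩ := dvd_iff_isRoot.2 hroot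
      have hQ : Q ≠ 0 := right_ne_zero_of_mul hR
      rw [natDegree_mul (X_sub_C_ne_zero r) hQ, natDegree_X_sub_C] at hd
      obtain ⟨P, hP, hPdeg, hPsign⟩ := ih hQ (by lia)
      refine ⟨(X - C √r) * P, mul_ne_zero (X_sub_C_ne_zero _) hP, ?_, fun s hs => ?_⟩
      · rw [natDegree_mul (X_sub_C_ne_zero _) hP, natDegree_X_sub_C]
        lia
      · have hsq : s ^ 2 - r = (s - √r) * (s + √r) := by
          linear_combination Real.sq_sqrt (mem_Ioi.1 hr).le
        have hfactor : ((X - C √r) * P).eval s * ((X - C r) * Q).eval (s ^ 2) =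
            (s - √r) ^ 2 * (s + √r) * (P.eval s * Q.eval (s ^ 2)) := by
          simp only [eval_mul, eval_sub, eval_X, eval_C, hsq]
          ring
        rw [hfactor]
        exact mul_nonneg (by positivity) (hPsign s hs)

lemma eval_mul_eq_sum_range {P : ℝ[X]} {d : ℕ} (hP : P.natDegree ≤ d) (s t : ℝ) :
    P.eval s * t = ∑ k ∈ Finset.range (d + 1), P.coeff k * (s ^ k * t) := by
  rw [eval_eq_sum_range' (Nat.lt_succ_of_le hP), Finset.sum_mul]
  simp only [mul_assoc]

lemma integrable_eval_mul {μ : Measure ℝ} {h : ℝ → ℝ} {P : ℝ[X]} {d : ℕ} (hP : P.natDegree ≤ d)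
    (hint : ∀ k ≤ d, Integrable (fun s => s ^ k * h s) μ) :
    Integrable (fun s => P.eval s * h s) μ := by
  simp only [eval_mul_eq_sum_range hP]
  exact integrable_finsetSum _ fun k hk =>
    (hint k (Finset.mem_range_succ_iff.1 hk)).const_mul _

lemma integral_eval_mul_eq_zero {μ : Measure ℝ} {h : ℝ → ℝ} {P : ℝ[X]} {d : ℕ}
    (hP : P.natDegree ≤ d) (hint : ∀ k ≤ d, Integrable (fun s => s ^ k * h s) μ)
    (hzero : ∀ k ≤ d, ∫ s, s ^ k * h s ∂μ = 0) :
    ∫ s, P.eval s * h s ∂μ = 0 := by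
  simp only [eval_mul_eq_sum_range hP]
  rw [integral_finsetSum _ fun k hk => (hint k (Finset.mem_range_succ_iff.1 hk)).const_mul _]
  refine Finset.sum_eq_zero fun k hk => ?_
  rw [integral_const_mul, hzero k (Finset.mem_range_succ_iff.1 hk), mul_zero]

lemma ae_eval_ne_zero {μ : Measure ℝ} [NullSingletonClass μ] {P : ℝ[X]} (hP : P ≠ 0) :
    ∀ᵐ s ∂μ, P.eval s ≠ 0 := by
  rw [ae_iff]
  simpa using! (finite_setOfPred_isRoot hP).measure_zero μ

lemma eq_zero_of_sign_eq_of_moments_eq_zero {h : ℝ → ℝ} {R : ℝ[X]}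
    (hsign : ∀ s, 0 < s → SignType.sign (h s) = SignType.sign (R.eval (s ^ 2)))
    (hint : ∀ k ≤ R.natDegree, IntegrableOn (fun s => s ^ k * h s) (Ioi 0))
    (hzero : ∀ k ≤ R.natDegree, ∫ s in Ioi (0 : ℝ), s ^ k * h s = 0) : R = 0 := by
  by_contra hR
  obtain ⟨P, hP, hPdeg, hPsign⟩ := exists_eval_mul_eval_sq_nonneg hR
  have hsign_mul (s : ℝ) (hs : 0 < s) :
      SignType.sign (P.eval s * h s) = SignType.sign (P.eval s * R.eval (s ^ 2)) := by
    rw [sign_mul, sign_mul, hsign s hs]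
  have hnonneg : ∀ᵐ s ∂volume.restrict (Ioi (0 : ℝ)), 0 ≤ P.eval s * h s := by
    filter_upwards [ae_restrict_mem measurableSet_Ioi] with s hs
    rw [← sign_nonneg_iff, hsign_mul s hs, sign_nonneg_iff]
    exact hPsign s hs
  have hvanish := (integral_eq_zero_iff_of_nonneg_ae hnonneg (integrable_eval_mul hPdeg hint)).1
    (integral_eval_mul_eq_zero hPdeg hint hzero)
  have hPR : P * R.comp (X ^ 2) ≠ 0 := by
    refine mul_ne_zero hP fun hcomp => ?_
    rcases comp_eq_zero_iff.1 hcomp with hR0 | ⟨-, hX⟩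
    · exact hR hR0
    · simpa using congrArg natDegree hX
  have hfalse : ∀ᵐ _ ∂volume.restrict (Ioi (0 : ℝ)), False := by
    filter_upwards [hvanish, ae_eval_ne_zero hPR, ae_restrict_mem measurableSet_Ioi]
      with s hs0 hsPR hs
    apply hsPR
    rw [eval_mul, eval_comp, eval_pow, eval_X, ← _root_.sign_eq_zero_iff, ← hsign_mul s hs,
      _root_.sign_eq_zero_iff]
    exact hs0
  rw [ae_iff] at hfalse
  simp at hfalse

lemma sign_sub_eq_of_strictAntiOn {φ : ℝ → ℝ} {t : Set ℝ} (hφ : StrictAntiOn φ t) {x y : ℝ}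
    (hx : x ∈ t) (hy : y ∈ t) : SignType.sign (φ x - φ y) = SignType.sign (y - x) := by
  rcases lt_trichotomy x y with hxy | rfl | hxy
  · rw [sign_pos (sub_pos.2 (hφ hx hy hxy)), sign_pos (sub_pos.2 hxy)]
  · simp
  · rw [sign_neg (sub_neg.2 (hφ hy hx hxy)), sign_neg (sub_neg.2 hxy)]

lemma eq_of_moments_comp_eval_sq_eq {φ : ℝ → ℝ} (hφ : StrictAntiOn φ (Ioi 0)) {A B : ℝ[X]} {n : ℕ}
    (hA : ∀ s, 0 < s → 0 < A.eval s) (hB : ∀ s, 0 < s → 0 < B.eval s)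
    (hdeg : (A - B).degree < n) (hcoeff : A.coeff 0 = B.coeff 0)
    (hAint : ∀ k, k + 2 ≤ n → IntegrableOn (fun s => s ^ k * φ (A.eval (s ^ 2))) (Ioi 0))
    (hBint : ∀ k, k + 2 ≤ n → IntegrableOn (fun s => s ^ k * φ (B.eval (s ^ 2))) (Ioi 0))
    (hmoments : ∀ k, k + 2 ≤ n → ∫ s in Ioi (0 : ℝ), s ^ k * φ (A.eval (s ^ 2)) =
      ∫ s in Ioi (0 : ℝ), s ^ k * φ (B.eval (s ^ 2))) :
    A = B := by
  by_contra hne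
  obtain ⟨R, hR⟩ : X ∣ A - B := X_dvd_iff.2 (by rw [coeff_sub, hcoeff, sub_self])
  have hRne : R ≠ 0 := by
    rintro rfl
    exact hne (sub_eq_zero.1 (hR.trans (mul_zero X)))
  have hRdeg : R.natDegree + 2 ≤ n := by
    have := (natDegree_lt_iff_degree_lt (sub_ne_zero.2 hne)).2 hdeg
    rw [hR, natDegree_mul X_ne_zero hRne, natDegree_X] at this
    lia
  refine hRne (eq_zero_of_sign_eq_of_moments_eq_zero
    (h := fun s => φ (B.eval (s ^ 2)) - φ (A.eval (s ^ 2))) (fun s hs => ?_) (fun k hk => ?_)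
    fun k hk => ?_)
  · have hs2 : 0 < s ^ 2 := pow_pos hs 2
    rw [sign_sub_eq_of_strictAntiOn hφ (hB _ hs2) (hA _ hs2), ← eval_sub, hR, eval_mul, eval_X,
      sign_mul, sign_pos hs2, one_mul]
  · simp only [mul_sub]
    exact (hBint k (by lia)).sub (hAint k (by lia))
  · simp only [mul_sub]
    rw [integral_sub (hBint k (by lia)) (hAint k (by lia)), hmoments k (by lia), sub_self]

end Moments

section Permutation

open Polynomial

variable {ι : Type*} [Fintype ι]

lemma exists_perm_of_map_univ_eq {α : Type*} {f g : ι → α}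
    (h : Finset.univ.val.map f = Finset.univ.val.map g) :
    ∃ σ : Equiv.Perm ι, ∀ j, g j = f (σ j) := by
  classical
  have hcard (c : α) : Fintype.card {j // g j = c} = Fintype.card {j // f j = c} := by
    simpa [Multiset.count_map, Fintype.card_subtype, Finset.card_def, eq_comm] using
      congrArg (Multiset.count c) h.symm
  exact ⟨Equiv.ofFiberEquiv fun c => Fintype.equivOfCardEq (hcard c),
    fun j => (Equiv.ofFiberEquiv_map _ j).symm⟩

lemma exists_perm_of_prod_X_sub_C_eq {R : Type*} [CommRing R] [IsDomain R] {f g : ι → R}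
    (h : ∏ j, (X - C (f j)) = ∏ j, (X - C (g j))) :
    ∃ σ : Equiv.Perm ι, ∀ j, g j = f (σ j) := by
  have hroots (f : ι → R) : (∏ j, (X - C (f j))).roots = Finset.univ.val.map f := by
    rw [← roots_multiset_prod_X_sub_C (Finset.univ.val.map f), Multiset.map_map]
    rfl
  exact exists_perm_of_map_univ_eq (by rw [← hroots, ← hroots, h])

lemma exists_perm_of_prod_X_add_C_sq_eq {f g : ι → ℝ} (hf : ∀ j, 0 ≤ f j) (hg : ∀ j, 0 ≤ g j)
    (h : ∏ j, (X + C (f j ^ 2)) = ∏ j, (X + C (g j ^ 2))) :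
    ∃ σ : Equiv.Perm ι, ∀ j, g j = f (σ j) := by
  obtain ⟨σ, hσ⟩ := exists_perm_of_prod_X_sub_C_eq
    (f := fun j => -f j ^ 2) (g := fun j => -g j ^ 2) (by simpa using h)
  exact ⟨σ, fun j => (sq_eq_sq₀ (hg j) (hf _)).1 (neg_injective (hσ j))⟩

end Permutation

section DiagonalMap

variable {ι : Type*} [Fintype ι] [DecidableEq ι]

/-- The linear map `(xⱼ)ⱼ ↦ (dⱼ xⱼ)ⱼ` of Euclidean space. The ellipsoid with semiaxes `a` is the
preimage of the closed unit ball under `diagonalMap a⁻¹`. -/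
noncomputable def diagonalMap (d : ι → ℝ) : EuclideanSpace ℝ ι →ₗ[ℝ] EuclideanSpace ℝ ι :=
  (Matrix.diagonal d).toEuclideanLin

lemma det_diagonalMap (d : ι → ℝ) : LinearMap.det (diagonalMap d) = ∏ j, d j := by
  simp [diagonalMap]

lemma norm_diagonalMap_sq (d : ι → ℝ) (x : EuclideanSpace ℝ ι) :
    ‖diagonalMap d x‖ ^ 2 = ∑ j, (d j * x j) ^ 2 := by
  simp [diagonalMap, EuclideanSpace.real_norm_sq_eq, Matrix.mulVec_diagonal]

lemma norm_diagonalMap_sqrt_one_add_sq (d : ι → ℝ) (s : ℝ) (x : EuclideanSpace ℝ ι) :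
    ‖diagonalMap (fun j => √(1 + (s * d j) ^ 2)) x‖ ^ 2 =
      ‖x‖ ^ 2 + (s * ‖diagonalMap d x‖) ^ 2 := by
  simp only [mul_pow s ‖_‖, norm_diagonalMap_sq]
  rw [EuclideanSpace.real_norm_sq_eq, Finset.mul_sum, ← Finset.sum_add_distrib]
  refine Finset.sum_congr rfl fun j _ => ?_
  rw [mul_pow, Real.sq_sqrt (by positivity)]
  ring

lemma continuous_norm_diagonalMap (d : ι → ℝ) : Continuous fun x => ‖diagonalMap d x‖ :=
  (diagonalMap d).continuous_of_finiteDimensional.norm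

lemma det_diagonalMap_ne_zero {d : ι → ℝ} (hd : ∀ j, d j ≠ 0) :
    LinearMap.det (diagonalMap d) ≠ 0 := by
  rw [det_diagonalMap]
  exact Finset.prod_ne_zero_iff.2 fun j _ => hd j

lemma injective_diagonalMap {d : ι → ℝ} (hd : ∀ j, d j ≠ 0) : Function.Injective (diagonalMap d) :=
  (LinearMap.equivOfDetNeZero _ (det_diagonalMap_ne_zero hd)).injective

lemma norm_diagonalMap_pos {d : ι → ℝ} (hd : ∀ j, d j ≠ 0) {x : EuclideanSpace ℝ ι} (hx : x ≠ 0) :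
    0 < ‖diagonalMap d x‖ :=
  norm_pos_iff.2 <| (map_ne_zero_iff _ (injective_diagonalMap hd)).2 hx

end DiagonalMap

section SemiaxesPoly

open Polynomial

variable {ι : Type*} [Fintype ι]

/-- The polynomial `∏ⱼ (X + aⱼ²)`, whose roots are the negatives of the squared semiaxes of the
ellipsoid with semiaxes `a`. -/
noncomputable def semiaxesPoly (a : ι → ℝ) : ℝ[X] :=
  ∏ j, (X + C (a j ^ 2))

lemma eval_semiaxesPoly (a : ι → ℝ) (t : ℝ) : (semiaxesPoly a).eval t = ∏ j, (t + a j ^ 2) := by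
  simp [semiaxesPoly, eval_prod]

lemma eval_semiaxesPoly_pos (a : ι → ℝ) {t : ℝ} (ht : 0 < t) : 0 < (semiaxesPoly a).eval t := by
  rw [eval_semiaxesPoly]
  exact Finset.prod_pos fun j _ => by positivity

lemma coeff_zero_semiaxesPoly (a : ι → ℝ) : (semiaxesPoly a).coeff 0 = (∏ j, a j) ^ 2 := by
  simp [coeff_zero_eq_eval_zero, eval_semiaxesPoly, Finset.prod_pow]

lemma monic_semiaxesPoly (a : ι → ℝ) : (semiaxesPoly a).Monic :=
  monic_prod_of_monic _ _ fun j _ => monic_X_add_C (a j ^ 2)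

lemma degree_semiaxesPoly (a : ι → ℝ) : (semiaxesPoly a).degree = Fintype.card ι := by
  simp [semiaxesPoly, degree_prod, degree_X_add_C, -map_pow]

lemma degree_semiaxesPoly_sub_lt (a b : ι → ℝ) :
    (semiaxesPoly a - semiaxesPoly b).degree < Fintype.card ι := by
  rw [← degree_semiaxesPoly a]
  exact degree_sub_lt_left (by simp only [degree_semiaxesPoly]) (monic_semiaxesPoly a).ne_zero
    (by simp only [(monic_semiaxesPoly _).leadingCoeff])

lemma prod_sqrt_one_add_mul_inv_sq {a : ι → ℝ} (ha : ∀ j, 0 < a j) (s : ℝ) :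
    ∏ j, √(1 + (s * (a j)⁻¹) ^ 2) = (∏ j, a j)⁻¹ * √((semiaxesPoly a).eval (s ^ 2)) := by
  rw [eval_semiaxesPoly, Real.sqrt_prod _ fun j _ => by positivity, ← Finset.prod_inv_distrib,
    ← Finset.prod_mul_distrib]
  refine Finset.prod_congr rfl fun j _ => ?_
  have hfactor : 1 + (s * (a j)⁻¹) ^ 2 = (a j)⁻¹ ^ 2 * (s ^ 2 + a j ^ 2) := by
    have := (ha j).ne'
    field_simp
    ring
  rw [hfactor, Real.sqrt_mul (sq_nonneg _), Real.sqrt_sq (inv_nonneg.2 (ha j).le)]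

end SemiaxesPoly

section Ellipsoid

open Metric

variable {n : ℕ}

instance isFiniteMeasure_sphereMeasure : IsFiniteMeasure (sphereMeasure n) :=
  inferInstanceAs (IsFiniteMeasure volume.toSphere)

lemma radial_image (T : EuclideanSpace ℝ (Fin n) ≃ₗᵢ[ℝ] EuclideanSpace ℝ (Fin n))
    (K : Set (EuclideanSpace ℝ (Fin n))) (x : EuclideanSpace ℝ (Fin n)) :
    radial (T '' K) (T x) = radial K x := by
  simp only [radial, ← map_smul, T.injective.mem_set_image]

lemma dualVolume_image (T : EuclideanSpace ℝ (Fin n) ≃ₗᵢ[ℝ] EuclideanSpace ℝ (Fin n))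
    (i : ℝ) (K : Set (EuclideanSpace ℝ (Fin n))) :
    dualVolume n i (T '' K) = dualVolume n i K := by
  have hsphere : MeasurePreserving (unitSphereHomeomorph T) (sphereMeasure n) (sphereMeasure n) :=
    measurePreserving_unitSphereHomeomorph T T.measurePreserving
  rw [dualVolume, ← hsphere.integral_comp (unitSphereHomeomorph T).measurableEmbedding]
  exact congrArg (1 / (n : ℝ) * ·) <| integral_congr_ae <| .of_forall fun θ =>
    congrArg (· ^ i) (radial_image T K θ)

lemma ellipsoidSet_comp_perm (a : Fin n → ℝ) (σ : Equiv.Perm (Fin n)) :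
    ellipsoidSet (a ∘ σ) = LinearIsometryEquiv.piLpCongrLeft 2 ℝ ℝ σ.symm '' ellipsoidSet a := by
  rw [LinearIsometryEquiv.image_eq_preimage_symm]
  ext x
  simp only [ellipsoidSet, mem_preimage, mem_ofPred_eq]
  conv_rhs => rw [← Equiv.sum_comp σ]
  simp [LinearIsometryEquiv.piLpCongrLeft_apply, Equiv.piCongrLeft'_apply]

variable {a : Fin n → ℝ}

lemma mem_ellipsoidSet_iff_norm_diagonalMap_le_one {x : EuclideanSpace ℝ (Fin n)} :
    x ∈ ellipsoidSet a ↔ ‖diagonalMap a⁻¹ x‖ ≤ 1 := by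
  rw [← sq_le_one_iff₀ (norm_nonneg _), norm_diagonalMap_sq]
  simp [ellipsoidSet, mul_pow, div_eq_inv_mul]

lemma radial_ellipsoidSet (ha : ∀ j, a j ≠ 0) {x : EuclideanSpace ℝ (Fin n)} (hx : x ≠ 0) :
    radial (ellipsoidSet a) x = ‖diagonalMap a⁻¹ x‖⁻¹ := by
  have hpos : 0 < ‖diagonalMap a⁻¹ x‖ := norm_diagonalMap_pos (fun j => inv_ne_zero (ha j)) hx
  have hray : {t : ℝ | 0 ≤ t ∧ t • x ∈ ellipsoidSet a} = Icc 0 ‖diagonalMap a⁻¹ x‖⁻¹ := by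
    ext t
    refine and_congr_right fun ht => ?_
    rw [mem_ellipsoidSet_iff_norm_diagonalMap_le_one, map_smul, norm_smul,
      Real.norm_of_nonneg ht, ← le_div_iff₀ hpos, one_div]
  rw [radial, hray, csSup_Icc (inv_nonneg.2 hpos.le)]

lemma dualVolume_natCast_ellipsoidSet (ha : ∀ j, a j ≠ 0) (i : ℕ) :
    dualVolume n i (ellipsoidSet a) =
      1 / n * ∫ θ : sphere (0 : EuclideanSpace ℝ (Fin n)) 1, ‖diagonalMap a⁻¹ θ‖⁻¹ ^ i
        ∂sphereMeasure n := by
  simp only [dualVolume, Real.rpow_natCast,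
    radial_ellipsoidSet ha (ne_zero_of_mem_unit_sphere _)]

section SphereIntegral

variable [NeZero n]

lemma integral_norm_diagonalMap_inv_pow {d : Fin n → ℝ} (hd : ∀ j, d j ≠ 0) :
    ∫ θ : sphere (0 : EuclideanSpace ℝ (Fin n)) 1, ‖diagonalMap d θ‖⁻¹ ^ n ∂sphereMeasure n =
      n * (|∏ j, d j|⁻¹ * volume.real (ball (0 : EuclideanSpace ℝ (Fin n)) 1)) := by
  rw [← det_diagonalMap]
  simpa only [finrank_euclideanSpace_fin] using!
    integral_toSphere_norm_map_inv_pow_finrank volume (det_diagonalMap_ne_zero hd)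

lemma dualVolume_self_ellipsoidSet (ha : ∀ j, 0 < a j) :
    dualVolume n n (ellipsoidSet a) =
      (∏ j, a j) * volume.real (ball (0 : EuclideanSpace ℝ (Fin n)) 1) := by
  have hn : (n : ℝ) ≠ 0 := NeZero.ne _
  rw [dualVolume_natCast_ellipsoidSet fun j => (ha j).ne',
    integral_norm_diagonalMap_inv_pow (d := a⁻¹) fun j => inv_ne_zero (ha j).ne', ← mul_assoc,
    one_div_mul_cancel hn, one_mul]
  simp only [Pi.inv_apply, Finset.prod_inv_distrib, abs_inv, inv_inv,
    abs_of_pos (Finset.prod_pos fun j _ => ha j)]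

lemma dualVolume_self_ellipsoidSet_pos (ha : ∀ j, 0 < a j) :
    0 < dualVolume n n (ellipsoidSet a) := by
  rw [dualVolume_self_ellipsoidSet ha]
  exact mul_pos (Finset.prod_pos fun j _ => ha j) (measureReal_ball_pos _ _ one_pos)

lemma integral_inv_sqrt_one_add_sq_norm_diagonalMap (ha : ∀ j, 0 < a j) (s : ℝ) :
    ∫ θ : sphere (0 : EuclideanSpace ℝ (Fin n)) 1,
        (√(1 + (s * ‖diagonalMap a⁻¹ θ‖) ^ 2))⁻¹ ^ n ∂sphereMeasure n =
      n * dualVolume n n (ellipsoidSet a) * (√((semiaxesPoly a).eval (s ^ 2)))⁻¹ := by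
  have hnorm (θ : sphere (0 : EuclideanSpace ℝ (Fin n)) 1) :
      √(1 + (s * ‖diagonalMap a⁻¹ θ‖) ^ 2) =
        ‖diagonalMap (fun j => √(1 + (s * a⁻¹ j) ^ 2)) (θ : EuclideanSpace ℝ (Fin n))‖ := by
    rw [Real.sqrt_eq_iff_eq_sq (by positivity) (norm_nonneg _), norm_diagonalMap_sqrt_one_add_sq,
      norm_eq_of_mem_sphere, one_pow]
  simp only [hnorm]
  rw [integral_norm_diagonalMap_inv_pow fun j => by positivity, Pi.inv_def,
    prod_sqrt_one_add_mul_inv_sq ha, dualVolume_self_ellipsoidSet ha, abs_of_nonneg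
      (mul_nonneg (inv_nonneg.2 (Finset.prod_nonneg fun j _ => (ha j).le)) (sqrt_nonneg _)),
    mul_inv, inv_inv]
  ring

end SphereIntegral

section Moments

variable {k : ℕ} (ha : ∀ j, 0 < a j) (hk : k + 2 ≤ n)
include ha hk

lemma integrable_prod_pow_mul_inv_sqrt_one_add_sq_norm_diagonalMap :
    Integrable (fun p : sphere (0 : EuclideanSpace ℝ (Fin n)) 1 × ℝ =>
        p.2 ^ k * (√(1 + (p.2 * ‖diagonalMap a⁻¹ p.1‖) ^ 2))⁻¹ ^ n)
      ((sphereMeasure n).prod (volume.restrict (Ioi 0))) := by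
  have ha_inv (j) : a⁻¹ j ≠ 0 := inv_ne_zero (ha j).ne'
  exact integrable_prod_pow_mul_comp_mul
    ((continuous_norm_diagonalMap a⁻¹).measurable.comp measurable_subtype_coe)
    (fun θ => norm_diagonalMap_pos ha_inv (ne_zero_of_mem_unit_sphere θ))
    (integrable_toSphere_norm_map_inv_pow volume (injective_diagonalMap ha_inv) (k + 1))
    (f := fun u => (√(1 + u ^ 2))⁻¹ ^ n) (by fun_prop)
    (integrableOn_Ioi_pow_mul_inv_sqrt_one_add_sq_pow hk)

lemma integrableOn_Ioi_pow_mul_inv_sqrt_semiaxesPoly :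
    IntegrableOn (fun s => s ^ k * (√((semiaxesPoly a).eval (s ^ 2)))⁻¹) (Ioi 0) := by
  have : NeZero n := ⟨by lia⟩
  have hne : n * dualVolume n n (ellipsoidSet a) ≠ 0 :=
    mul_ne_zero (NeZero.ne _) (dualVolume_self_ellipsoidSet_pos ha).ne'
  have hint :=
    (integrable_prod_pow_mul_inv_sqrt_one_add_sq_norm_diagonalMap ha hk).integral_prod_right
  simp only [integral_const_mul, integral_inv_sqrt_one_add_sq_norm_diagonalMap ha,
    mul_left_comm _ (n * dualVolume n n (ellipsoidSet a))] at hint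
  exact (integrable_const_mul_iff hne.isUnit _).1 hint

lemma dualVolume_mul_integral_Ioi_pow_mul_inv_sqrt_semiaxesPoly :
    dualVolume n n (ellipsoidSet a) *
        ∫ s in Ioi (0 : ℝ), s ^ k * (√((semiaxesPoly a).eval (s ^ 2)))⁻¹ =
      dualVolume n (k + 1 : ℕ) (ellipsoidSet a) *
        ∫ u in Ioi (0 : ℝ), u ^ k * (√(1 + u ^ 2))⁻¹ ^ n := by
  have : NeZero n := ⟨by lia⟩
  have hn : (n : ℝ) ≠ 0 := NeZero.ne _
  have hpos (θ : sphere (0 : EuclideanSpace ℝ (Fin n)) 1) : 0 < ‖diagonalMap a⁻¹ θ‖ :=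
    norm_diagonalMap_pos (fun j => inv_ne_zero (ha j).ne') (ne_zero_of_mem_unit_sphere θ)
  have hswap := integral_Ioi_pow_mul_integral_comp_mul (f := fun u => (√(1 + u ^ 2))⁻¹ ^ n) hpos
    (integrable_prod_pow_mul_inv_sqrt_one_add_sq_norm_diagonalMap ha hk)
  simp only [integral_inv_sqrt_one_add_sq_norm_diagonalMap ha,
    mul_left_comm _ (n * dualVolume n n (ellipsoidSet a)), integral_const_mul] at hswap
  rw [dualVolume_natCast_ellipsoidSet (fun j => (ha j).ne') (k + 1), mul_assoc]
  refine Eq.trans ?_ (congrArg (1 / (n : ℝ) * ·) hswap)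
  rw [← mul_assoc, ← mul_assoc, one_div_mul_cancel hn, one_mul]

end Moments

end Ellipsoid

section Congruence

variable {n : ℕ} {a b : Fin n → ℝ}

lemma strictAntiOn_inv_sqrt : StrictAntiOn (fun t : ℝ => (√t)⁻¹) (Ioi 0) := fun _ hx _ _ hxy =>
  (inv_lt_inv₀ (sqrt_pos.2 (hx.trans hxy)) (sqrt_pos.2 hx)).2 (sqrt_lt_sqrt (mem_Ioi.1 hx).le hxy)

lemma semiaxesPoly_eq_of_dualVolume_ellipsoidSet_eq [NeZero n] (ha : ∀ j, 0 < a j)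
    (hb : ∀ j, 0 < b j)
    (h : ∀ i : ℕ, 1 ≤ i → i ≤ n →
      dualVolume n i (ellipsoidSet a) = dualVolume n i (ellipsoidSet b)) :
    semiaxesPoly a = semiaxesPoly b := by
  have hvol : dualVolume n n (ellipsoidSet a) = dualVolume n n (ellipsoidSet b) :=
    h n NeZero.one_le le_rfl
  have hprod : ∏ j, a j = ∏ j, b j := by
    rw [dualVolume_self_ellipsoidSet ha, dualVolume_self_ellipsoidSet hb] at hvol
    exact mul_right_cancel₀ (measureReal_ball_pos _ _ one_pos).ne' hvol
  refine eq_of_moments_comp_eval_sq_eq strictAntiOn_inv_sqrt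
    (fun s => eval_semiaxesPoly_pos a) (fun s => eval_semiaxesPoly_pos b)
    (by simpa using degree_semiaxesPoly_sub_lt a b)
    (by rw [coeff_zero_semiaxesPoly, coeff_zero_semiaxesPoly, hprod])
    (fun k => integrableOn_Ioi_pow_mul_inv_sqrt_semiaxesPoly ha)
    (fun k => integrableOn_Ioi_pow_mul_inv_sqrt_semiaxesPoly hb) fun k hk => ?_
  apply mul_left_cancel₀ (dualVolume_self_ellipsoidSet_pos ha).ne'
  rw [dualVolume_mul_integral_Ioi_pow_mul_inv_sqrt_semiaxesPoly ha hk,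
    h (k + 1) (by lia) (by lia), hvol,
    dualVolume_mul_integral_Ioi_pow_mul_inv_sqrt_semiaxesPoly hb hk]

end Congruence

/-- **Theorem (main result).** Two centered ellipsoids in `ℝⁿ`, `n ≥ 2`, with equal dual
volumes `Ṽ_1, …, Ṽ_n` are congruent; equivalently, their multisets of semiaxes coincide. -/
theorem dualVolumes_determine_ellipsoid
    (n : ℕ) (hn : 2 ≤ n) (a b : Fin n → ℝ)
    (ha : ∀ j, 0 < a j) (hb : ∀ j, 0 < b j)
    (T₁ T₂ : EuclideanSpace ℝ (Fin n) ≃ₗᵢ[ℝ] EuclideanSpace ℝ (Fin n))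
    (E₁ E₂ : Set (EuclideanSpace ℝ (Fin n)))
    (hE₁ : E₁ = T₁ '' ellipsoidSet a) (hE₂ : E₂ = T₂ '' ellipsoidSet b)
    (h : ∀ i : ℕ, 1 ≤ i → i ≤ n → dualVolume n (i : ℝ) E₁ = dualVolume n (i : ℝ) E₂) :
    (∃ T : EuclideanSpace ℝ (Fin n) ≃ₗᵢ[ℝ] EuclideanSpace ℝ (Fin n), E₂ = T '' E₁) ∧
      ∃ σ : Equiv.Perm (Fin n), ∀ j, b j = a (σ j) := by
  subst hE₁ hE₂
  have : NeZero n := ⟨by lia⟩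
  simp only [dualVolume_image] at h
  obtain ⟨σ, hσ⟩ := exists_perm_of_prod_X_add_C_sq_eq (fun j => (ha j).le) (fun j => (hb j).le)
    (semiaxesPoly_eq_of_dualVolume_ellipsoidSet_eq ha hb h)
  obtain rfl : b = a ∘ σ := funext hσ
  let T := (T₁.symm.trans (LinearIsometryEquiv.piLpCongrLeft 2 ℝ ℝ σ.symm)).trans T₂
  refine ⟨⟨T, ?_⟩, σ, hσ⟩
  rw [ellipsoidSet_comp_perm, image_image, image_image]
  simp [T]
end

section
/- Let E be an ellipsoid in ℝⁿ centered at the origin. Then for every real number i one has Ṽ_i(E) = (1/κₙ) · Ṽₙ(E) · Ṽ_{n−i}(E°), where E° is the polar body of E and κₙ is the volume of the unit Euclidean ball in ℝⁿ. -/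
open MeasureTheory Real Set
open scoped RealInnerProductSpace

/-- The polar body `K° = {x : ⟨x,y⟩ ≤ 1 for all y ∈ K}`. -/
def polarBody {n : ℕ} (K : Set (EuclideanSpace ℝ (Fin n))) :
    Set (EuclideanSpace ℝ (Fin n)) :=
  {x | ∀ y ∈ K, ⟪x, y⟫ ≤ 1}

/-- `κₙ = π^{n/2} / Γ(n/2 + 1)`, the volume of the unit Euclidean ball in `ℝⁿ`. -/
noncomputable def kappa (n : ℕ) : ℝ :=
  Real.pi ^ ((n : ℝ) / 2) / Real.Gamma ((n : ℝ) / 2 + 1)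

/-!
Write `E = A B` with `B` the unit ball. On the unit sphere `ρ_E(θ) = ‖A⁻¹ θ‖⁻¹` and
`ρ_{E°}(θ) = ‖Aᵀ θ‖⁻¹`. The spherical integral of a function that is positively homogeneous of
degree `-n` changes under a linear substitution `M` only by the factor `|det M|⁻¹`. Substituting
`A` in `x ↦ ‖A⁻¹ x‖ ^ (-i) * ‖x‖ ^ (i - n)` turns `∫ ‖A⁻¹ θ‖ ^ (-i)` into
`|det A| * ∫ ‖A θ‖ ^ (i - n)`. Since `AᵀA` and `AAᵀ` are orthogonally equivalent,
`‖Aᵀ x‖ = ‖A (W x)‖` for a linear isometry `W`, and substituting `W` replaces `A` by `Aᵀ` in the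
last integral. Hence `Ṽ_i(E) = |det A| Ṽ_{n-i}(E°)`, and the case `i = n` identifies the constant,
`Ṽ_0` being `κₙ` for every body.
-/

open Metric Module
open scoped ENNReal

section SphericalIntegral

variable {V F : Type*} [NormedAddCommGroup V] [NormedSpace ℝ V] [FiniteDimensional ℝ V]
  [MeasurableSpace V] [BorelSpace V] [NormedAddCommGroup F] [NormedSpace ℝ F]
  (μ : Measure V) [μ.IsAddHaarMeasure]

theorem lintegral_eq_lintegral_toSphere_volumeIoiPow [Nontrivial V] {f : V → ℝ≥0∞}
    (hf : Measurable f) :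
    ∫⁻ x, f x ∂μ = ∫⁻ θ : sphere (0 : V) 1, ∫⁻ r : Ioi (0 : ℝ), f (r.1 • θ.1)
      ∂Measure.volumeIoiPow (finrank ℝ V - 1) ∂μ.toSphere := by
  have hmeas : Measurable fun p : sphere (0 : V) 1 × Ioi (0 : ℝ) ↦ f (p.2.1 • p.1.1) :=
    hf.comp (by fun_prop)
  have hpolar (x : ({0}ᶜ : Set V)) : f ((homeomorphUnitSphereProd V x).2.1 •
      (homeomorphUnitSphereProd V x).1.1) = f x := by
    rw [← homeomorphUnitSphereProd_symm_apply_coe, Homeomorph.symm_apply_apply]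
  calc
    ∫⁻ x, f x ∂μ = ∫⁻ x : ({0}ᶜ : Set V), f x ∂μ.comap (↑) := by
      rw [lintegral_subtype_comap (measurableSet_singleton _).compl, restrict_compl_singleton]
    _ = ∫⁻ p, f (p.2.1 • p.1.1)
        ∂μ.toSphere.prod (Measure.volumeIoiPow (finrank ℝ V - 1)) := by
      simp_rw [← μ.measurePreserving_homeomorphUnitSphereProd.lintegral_comp hmeas, hpolar]
    _ = _ := lintegral_prod _ hmeas.aemeasurable

theorem volumeIoiPow_setOf_mul_lt_one {n : ℕ} (hn : n ≠ 0) {a : ℝ} (ha : 0 < a) :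
    Measure.volumeIoiPow (n - 1) {r | r.1 * a < 1} = (ENNReal.ofReal a ^ n * n)⁻¹ := by
  have hset : {r : Ioi (0 : ℝ) | r.1 * a < 1} = Iio ⟨a⁻¹, inv_pos.2 ha⟩ := by
    ext r
    rw [mem_ofPred_eq, mem_Iio, ← Subtype.coe_lt_coe, ← lt_div_iff₀ ha, one_div]
  have hpred : n - 1 + 1 = n := Nat.succ_pred hn
  rw [hset, Measure.volumeIoiPow_apply_Iio, ← Nat.cast_add_one, hpred, inv_pow, div_eq_mul_inv,
    ← mul_inv, ENNReal.ofReal_inv_of_pos (by positivity), ENNReal.ofReal_mul (by positivity),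
    ENNReal.ofReal_pow ha.le, ENNReal.ofReal_natCast]

/- The integrand on the right is constant along rays, and its factor `p θ ^ n` cancels the weight
`p θ ^ (-n) / n` of the segment of the ray through `θ` where `p < 1`. So any gauge `p` will do, and
a linear change of variables only has to replace one gauge by another. -/
theorem lintegral_toSphere_eq_setLIntegral_of_homogeneous [Nontrivial V] {f : V → ℝ≥0∞}
    (hf : Measurable f)
    (hf_smul : ∀ r x, 0 < r → ENNReal.ofReal r ^ finrank ℝ V * f (r • x) = f x)
    {p : V → ℝ} (hp : Measurable p) (hp_pos : ∀ x ≠ 0, 0 < p x)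
    (hp_smul : ∀ r x, 0 < r → p (r • x) = r * p x) :
    ∫⁻ θ : sphere (0 : V) 1, f θ ∂μ.toSphere =
      finrank ℝ V * ∫⁻ x in {x | p x < 1}, ENNReal.ofReal (p x) ^ finrank ℝ V * f x ∂μ := by
  have hdim : finrank ℝ V ≠ 0 := finrank_pos.ne'
  have hmeas : Measurable fun x ↦ ENNReal.ofReal (p x) ^ finrank ℝ V * f x := by fun_prop
  have hset : MeasurableSet {x | p x < 1} := measurableSet_lt hp measurable_const
  rw [← lintegral_indicator hset, lintegral_eq_lintegral_toSphere_volumeIoiPow μ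
    (hmeas.indicator hset), ← lintegral_const_mul' _ _ (ENNReal.natCast_ne_top _)]
  refine lintegral_congr fun θ ↦ ?_
  have hpθ : 0 < p θ := hp_pos _ (ne_zero_of_mem_unit_sphere θ)
  have hray (r : Ioi (0 : ℝ)) :
      {x | p x < 1}.indicator (fun x ↦ ENNReal.ofReal (p x) ^ finrank ℝ V * f x) (r.1 • θ.1) =
        {r : Ioi (0 : ℝ) | r.1 * p θ < 1}.indicator
          (fun _ ↦ ENNReal.ofReal (p θ) ^ finrank ℝ V * f θ) r := by
    simp only [indicator_apply, mem_ofPred_eq, hp_smul _ _ r.2, ENNReal.ofReal_mul r.2.out.le,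
      mul_pow, ← hf_smul _ θ.1 r.2]
    congr 1
    ring
  simp_rw [hray]
  rw [lintegral_indicator_const (measurableSet_lt (by fun_prop) measurable_const),
    volumeIoiPow_setOf_mul_lt_one hdim hpθ, ← mul_assoc, ← mul_assoc, mul_right_comm,
    mul_comm (finrank ℝ V : ℝ≥0∞), ENNReal.mul_inv_cancel, one_mul]
  · simp [hdim, hpθ]
  · finiteness

theorem lintegral_toSphere_comp_linearEquiv {f : V → ℝ≥0∞} (hf : Measurable f)
    (hf_smul : ∀ r x, 0 < r → ENNReal.ofReal r ^ finrank ℝ V * f (r • x) = f x)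
    (M : V ≃ₗ[ℝ] V) :
    ENNReal.ofReal |LinearMap.det (M : V →ₗ[ℝ] V)| *
        ∫⁻ θ : sphere (0 : V) 1, f (M θ) ∂μ.toSphere =
      ∫⁻ θ : sphere (0 : V) 1, f θ ∂μ.toSphere := by
  rcases subsingleton_or_nontrivial V with _ | _
  · simp [μ.toSphere_eq_zero_iff.2 ‹_›]
  have hM : Measurable M := M.toContinuousLinearEquiv.continuous.measurable
  have hmap : ENNReal.ofReal |LinearMap.det (M : V →ₗ[ℝ] V)| • μ.map M = μ := by
    have hdet : LinearMap.det (M : V →ₗ[ℝ] V) ≠ 0 := M.isUnit_det'.ne_zero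
    rw [← LinearEquiv.coe_coe, Measure.map_linearMap_addHaar_eq_smul_addHaar μ hdet, smul_smul,
      ← ENNReal.ofReal_mul (abs_nonneg _), ← abs_mul, mul_inv_cancel₀ hdet]
    simp
  have hset : MeasurableSet {x : V | ‖x‖ < 1} := measurableSet_lt (by fun_prop) measurable_const
  rw [lintegral_toSphere_eq_setLIntegral_of_homogeneous μ (f := fun x ↦ f (M x)) (hf.comp hM)
      (p := fun x ↦ ‖M x‖)
      (fun r x hr ↦ by simp [hf_smul r _ hr]) hM.norm (by simp)
      (fun r x hr ↦ by simp [norm_smul, abs_of_pos hr]),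
    lintegral_toSphere_eq_setLIntegral_of_homogeneous μ hf hf_smul measurable_norm (by simp)
      (fun r x hr ↦ by simp [norm_smul, abs_of_pos hr]), mul_left_comm]
  congr 1
  conv_rhs => rw [← hmap]
  rw [Measure.restrict_smul, lintegral_smul_measure, setLIntegral_map hset (by fun_prop) hM,
    smul_eq_mul]
  rfl

theorem integral_toSphere_comp_linearEquiv {f : V → ℝ} (hf : Measurable f) (hf_nonneg : 0 ≤ f)
    (hf_smul : ∀ r x, 0 < r → r ^ finrank ℝ V * f (r • x) = f x) (M : V ≃ₗ[ℝ] V) :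
    |LinearMap.det (M : V →ₗ[ℝ] V)| * ∫ θ : sphere (0 : V) 1, f (M θ) ∂μ.toSphere =
      ∫ θ : sphere (0 : V) 1, f θ ∂μ.toSphere := by
  have hM : Measurable M := M.toContinuousLinearEquiv.continuous.measurable
  have hf_smul' (r x) (hr : 0 < r) :
      ENNReal.ofReal r ^ finrank ℝ V * ENNReal.ofReal (f (r • x)) = ENNReal.ofReal (f x) := by
    rw [← ENNReal.ofReal_pow hr.le, ← ENNReal.ofReal_mul (by positivity), hf_smul r x hr]
  have integral_eq {g : V → ℝ} (hg : Measurable g) (hg_nonneg : 0 ≤ g) :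
      ∫ θ : sphere (0 : V) 1, g θ ∂μ.toSphere =
        (∫⁻ θ : sphere (0 : V) 1, ENNReal.ofReal (g θ) ∂μ.toSphere).toReal :=
    integral_eq_lintegral_of_nonneg_ae (.of_forall fun θ ↦ hg_nonneg θ)
      (hg.comp measurable_subtype_coe).aestronglyMeasurable
  rw [integral_eq (g := fun x ↦ f (M x)) (hf.comp hM) fun x ↦ hf_nonneg (M x),
    integral_eq hf hf_nonneg,
    ← lintegral_toSphere_comp_linearEquiv μ hf.ennreal_ofReal hf_smul' M, ENNReal.toReal_mul,
    ENNReal.toReal_ofReal (abs_nonneg _)]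

theorem integral_toSphere_norm_rpow_comp_linearEquiv (B : V →ₗ[ℝ] F) (s : ℝ) (M : V ≃ₗ[ℝ] V) :
    |LinearMap.det (M : V →ₗ[ℝ] V)| *
        ∫ θ : sphere (0 : V) 1, ‖B (M θ)‖ ^ s * ‖M θ‖ ^ (-finrank ℝ V - s) ∂μ.toSphere =
      ∫ θ : sphere (0 : V) 1, ‖B θ‖ ^ s ∂μ.toSphere := by
  have hB : Measurable fun x ↦ ‖B x‖ := B.continuous_of_finiteDimensional.norm.measurable
  have hsmul (r : ℝ) (x : V) (hr : 0 < r) :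
      r ^ finrank ℝ V * (‖B (r • x)‖ ^ s * ‖r • x‖ ^ (-finrank ℝ V - s)) =
        ‖B x‖ ^ s * ‖x‖ ^ (-finrank ℝ V - s) := by
    have hcancel : r ^ finrank ℝ V * (r ^ s * r ^ (-finrank ℝ V - s)) = 1 := by
      rw [← rpow_natCast, ← rpow_add hr, ← rpow_add hr]
      simp
    rw [map_smul, norm_smul, norm_smul, norm_of_nonneg hr.le, mul_rpow hr.le (norm_nonneg _),
      mul_rpow hr.le (norm_nonneg _), mul_mul_mul_comm, ← mul_assoc, hcancel, one_mul]
  have hsubst := integral_toSphere_comp_linearEquiv μ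
    (f := fun x ↦ ‖B x‖ ^ s * ‖x‖ ^ (-finrank ℝ V - s)) (by fun_prop)
    (fun x ↦ by positivity) hsmul M
  simpa using hsubst

theorem integral_toSphere_norm_symm_rpow (A : V ≃ₗ[ℝ] V) (s : ℝ) :
    ∫ θ : sphere (0 : V) 1, ‖A.symm θ‖ ^ s ∂μ.toSphere =
      |LinearMap.det (A : V →ₗ[ℝ] V)| *
        ∫ θ : sphere (0 : V) 1, ‖A θ‖ ^ (-finrank ℝ V - s) ∂μ.toSphere := by
  simpa using (integral_toSphere_norm_rpow_comp_linearEquiv μ (A.symm : V →ₗ[ℝ] V) s A).symm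

end SphericalIntegral

theorem linearMap_charpoly_mul_comm {R M : Type*} [CommRing R] [AddCommGroup M] [Module R M]
    [Module.Free R M] [Module.Finite R M] (f g : M →ₗ[R] M) :
    (f * g).charpoly = (g * f).charpoly := by
  let b := Free.chooseBasis R M
  rw [← LinearMap.charpoly_toMatrix _ b, ← LinearMap.charpoly_toMatrix _ b, LinearMap.toMatrix_mul,
    LinearMap.toMatrix_mul, Matrix.charpoly_mul_comm]

section UnitaryEquivalence

variable {𝕜 V V' : Type*} [RCLike 𝕜] [NormedAddCommGroup V] [InnerProductSpace 𝕜 V]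
  [FiniteDimensional 𝕜 V] [NormedAddCommGroup V'] [InnerProductSpace 𝕜 V'] [FiniteDimensional 𝕜 V']

theorem exists_linearIsometryEquiv_conj_of_charpoly_eq {S : V →ₗ[𝕜] V} {T : V' →ₗ[𝕜] V'}
    (hS : S.IsSymmetric) (hT : T.IsSymmetric) (h : S.charpoly = T.charpoly) :
    ∃ W : V' ≃ₗᵢ[𝕜] V, ∀ x, S (W x) = W (T x) := by
  have hdim : finrank 𝕜 V' = finrank 𝕜 V := by
    rw [← S.charpoly_natDegree, ← T.charpoly_natDegree, h]
  have heigen : hS.eigenvalues rfl = hT.eigenvalues hdim :=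
    (hS.eigenvalues_eq_eigenvalues_iff rfl hT hdim).2 h
  let b := hS.eigenvectorBasis rfl
  let c := hT.eigenvectorBasis hdim
  let W : V' ≃ₗᵢ[𝕜] V := c.equiv b (Equiv.refl _)
  have hW (j) : W (c j) = b j := by simp [W]
  have hconj : S ∘ₗ W.toLinearEquiv = W.toLinearEquiv ∘ₗ T := by
    refine c.toBasis.ext fun j ↦ ?_
    simp [hW, b, c, hS.apply_eigenvectorBasis, hT.apply_eigenvectorBasis, heigen]
  exact ⟨W, LinearMap.congr_fun hconj⟩

theorem exists_linearIsometryEquiv_norm_apply_eq_norm_adjoint (T : V →ₗ[𝕜] V) :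
    ∃ W : V ≃ₗᵢ[𝕜] V, ∀ x, ‖T (W x)‖ = ‖T.adjoint x‖ := by
  obtain ⟨W, hW⟩ := exists_linearIsometryEquiv_conj_of_charpoly_eq T.isSymmetric_adjoint_comp_self
    T.isSymmetric_self_comp_adjoint (linearMap_charpoly_mul_comm _ _)
  have hinner (x : V) : inner 𝕜 (T (W x)) (T (W x)) = inner 𝕜 (T.adjoint x) (T.adjoint x) := calc
    inner 𝕜 (T (W x)) (T (W x)) = inner 𝕜 (T.adjoint (T (W x))) (W x) :=
      (T.adjoint_inner_left _ _).symm
    _ = inner 𝕜 (W (T (T.adjoint x))) (W x) := congrArg (inner 𝕜 · (W x)) (hW x)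
    _ = inner 𝕜 (T.adjoint x) (T.adjoint x) := by rw [W.inner_map_map, T.adjoint_inner_right]
  refine ⟨W, fun x ↦ ?_⟩
  rw [@norm_eq_sqrt_re_inner 𝕜, @norm_eq_sqrt_re_inner 𝕜, hinner]

end UnitaryEquivalence

theorem integral_toSphere_norm_adjoint_rpow {V : Type*} [NormedAddCommGroup V]
    [InnerProductSpace ℝ V] [FiniteDimensional ℝ V] [MeasurableSpace V] [BorelSpace V]
    (μ : Measure V) [μ.IsAddHaarMeasure] (T : V →ₗ[ℝ] V) (s : ℝ) :
    ∫ θ : sphere (0 : V) 1, ‖T.adjoint θ‖ ^ s ∂μ.toSphere =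
      ∫ θ : sphere (0 : V) 1, ‖T θ‖ ^ s ∂μ.toSphere := by
  obtain ⟨W, hW⟩ := exists_linearIsometryEquiv_norm_apply_eq_norm_adjoint T
  have hdet : |LinearMap.det (W.toLinearEquiv : V →ₗ[ℝ] V)| = 1 := by
    rw [← LinearMap.normDet_eq_abs_det]
    exact W.toLinearIsometry.normDet_eq_one
  simpa [hdet, hW] using integral_toSphere_norm_rpow_comp_linearEquiv μ T s W.toLinearEquiv

section DualVolume

variable {m n : ℕ}

theorem polarBody_image (T : EuclideanSpace ℝ (Fin m) →ₗ[ℝ] EuclideanSpace ℝ (Fin n))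
    (K : Set (EuclideanSpace ℝ (Fin m))) :
    polarBody (T '' K) = T.adjoint ⁻¹' polarBody K := by
  ext x
  simp [polarBody, LinearMap.adjoint_inner_left]

theorem polarBody_closedBall :
    polarBody (closedBall (0 : EuclideanSpace ℝ (Fin n)) 1) = closedBall 0 1 := by
  ext x
  simp only [polarBody, mem_ofPred_eq, mem_closedBall_zero_iff]
  refine ⟨fun h ↦ ?_,
    fun hx y hy ↦ (real_inner_le_norm x y).trans (mul_le_one₀ hx (norm_nonneg _) hy)⟩
  rcases eq_or_ne x 0 with rfl | hx
  · simp
  have hnorm : ‖x‖ ≠ 0 := norm_ne_zero_iff.2 hx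
  have hunit := h (‖x‖⁻¹ • x) (by simp [norm_smul, hnorm])
  rwa [real_inner_smul_right, real_inner_self_eq_norm_mul_norm, inv_mul_cancel_left₀ hnorm] at hunit

variable {F : Type*} [NormedAddCommGroup F] [NormedSpace ℝ F]

theorem radial_preimage_closedBall (B : EuclideanSpace ℝ (Fin n) →ₗ[ℝ] F)
    {x : EuclideanSpace ℝ (Fin n)} (hx : B x ≠ 0) :
    radial (B ⁻¹' closedBall 0 1) x = ‖B x‖⁻¹ := by
  have hpos : 0 < ‖B x‖ := norm_pos_iff.2 hx
  have hray : {t : ℝ | 0 ≤ t ∧ t • x ∈ B ⁻¹' closedBall 0 1} = Icc 0 ‖B x‖⁻¹ := by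
    ext t
    refine and_congr_right fun ht ↦ ?_
    simp [norm_smul, abs_of_nonneg ht, ← one_div, le_div_iff₀ hpos]
  rw [radial, hray, csSup_Icc (by positivity)]

theorem dualVolume_preimage_closedBall {B : EuclideanSpace ℝ (Fin n) →ₗ[ℝ] F}
    (hB : Function.Injective B) (i : ℝ) :
    dualVolume n i (B ⁻¹' closedBall 0 1) =
      (1 / n) * ∫ θ : sphere (0 : EuclideanSpace ℝ (Fin n)) 1, ‖B θ‖ ^ (-i) ∂sphereMeasure n := by
  rw [dualVolume]
  congr 2 with θ
  have hBθ : B θ ≠ 0 := (map_ne_zero_iff B hB).2 (ne_zero_of_mem_unit_sphere θ)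
  rw [radial_preimage_closedBall B hBθ, inv_rpow (norm_nonneg _), rpow_neg (norm_nonneg _)]

theorem dualVolume_image_closedBall_eq_abs_det_mul
    (A : EuclideanSpace ℝ (Fin n) ≃ₗ[ℝ] EuclideanSpace ℝ (Fin n)) (i : ℝ) :
    dualVolume n i (A '' closedBall 0 1) =
      |LinearMap.det (A : EuclideanSpace ℝ (Fin n) →ₗ[ℝ] EuclideanSpace ℝ (Fin n))| *
        dualVolume n (n - i) (polarBody (A '' closedBall 0 1)) := by
  have hE : A '' closedBall 0 1 = A.symm.toLinearMap ⁻¹' closedBall 0 1 :=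
    A.toEquiv.image_eq_preimage_symm _
  have hpolar : polarBody (A '' closedBall 0 1) = A.toLinearMap.adjoint ⁻¹' closedBall 0 1 :=
    (polarBody_image A.toLinearMap _).trans (congrArg _ polarBody_closedBall)
  have hadj : Function.Injective A.toLinearMap.adjoint := by
    rw [← LinearMap.ker_eq_bot, ← LinearMap.orthogonal_range, LinearEquiv.range,
      Submodule.top_orthogonal_eq_bot]
  have hsymm := integral_toSphere_norm_symm_rpow volume A (-i)
  have hadjoint := integral_toSphere_norm_adjoint_rpow volume A.toLinearMap (i - n)
  rw [finrank_euclideanSpace_fin, neg_sub_neg] at hsymm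
  rw [hpolar, dualVolume_preimage_closedBall hadj, hE,
    dualVolume_preimage_closedBall A.symm.injective, neg_sub, sphereMeasure, hadjoint,
    mul_left_comm]
  exact congrArg _ hsymm

theorem kappa_pos (n : ℕ) : 0 < kappa n :=
  div_pos (rpow_pos_of_pos pi_pos _) (Gamma_pos_of_pos (by positivity))

theorem volume_real_ball_eq_kappa (n : ℕ) :
    volume.real (ball (0 : EuclideanSpace ℝ (Fin n)) 1) = kappa n := by
  rcases n.eq_zero_or_pos with rfl | hn
  · simp [kappa, measureReal_def, volume_euclideanSpace_eq_dirac]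
  have : NeZero n := ⟨hn.ne'⟩
  rw [measureReal_def, EuclideanSpace.volume_ball, ENNReal.ofReal_one, one_pow, one_mul,
    Fintype.card_fin, ENNReal.toReal_ofReal (by positivity), kappa, sqrt_eq_rpow,
    ← rpow_mul_natCast pi_nonneg, one_div_mul_eq_div]

theorem dualVolume_zero (hn : n ≠ 0) (K : Set (EuclideanSpace ℝ (Fin n))) :
    dualVolume n 0 K = kappa n := by
  have : (n : ℝ) ≠ 0 := Nat.cast_ne_zero.2 hn
  simp only [dualVolume, sphereMeasure, rpow_zero, integral_const, smul_eq_mul, mul_one,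
    Measure.toSphere_real_apply_univ, finrank_euclideanSpace_fin, volume_real_ball_eq_kappa]
  field_simp

end DualVolume

/-- For a centered ellipsoid `E` in `ℝⁿ`, `Ṽ_i(E) = (1/κₙ) Ṽₙ(E) Ṽ_{n-i}(E°)` for all real `i`. -/
theorem dualVolume_polar_relation
    (n : ℕ) (hn : 0 < n)
    (A : EuclideanSpace ℝ (Fin n) ≃ₗ[ℝ] EuclideanSpace ℝ (Fin n))
    (E : Set (EuclideanSpace ℝ (Fin n)))
    (hE : E = A '' Metric.closedBall (0 : EuclideanSpace ℝ (Fin n)) 1)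
    (i : ℝ) :
    dualVolume n i E = (1 / kappa n) * dualVolume n (n : ℝ) E *
      dualVolume n ((n : ℝ) - i) (polarBody E) := by
  rw [hE, dualVolume_image_closedBall_eq_abs_det_mul A i,
    dualVolume_image_closedBall_eq_abs_det_mul A n, sub_self, dualVolume_zero hn.ne']
  field_simp [(kappa_pos n).ne']
end

section
/- Let E be a centered ellipsoid in ℝⁿ with semiaxes a₁,…,aₙ > 0. For every real number i with n < i < n+2, Ṽ_i(E) = (4π^{n/2} / (n Γ((n−i)/2) Γ(i/2))) · ∫₀^∞ u^{i−1} · ( ((1 + u²/a₁²)⋯(1 + u²/aₙ²))^{−1/2} − a₁⋯aₙ/uⁿ ) du, where Γ((n−i)/2) is the value of the Gamma function extended to negative non-integer arguments via Γ(z) = Γ(z+1)/z. -/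
open MeasureTheory Real Set

/-!
Let `q` be the quadratic form with `E = {q ≤ 1}`, so that `ρ_E ^ i = q ^ (-i / 2)` on the sphere.
The integral over `ℝⁿ` of `(1 - exp (-‖x‖²)) * q x ^ (-i / 2)` can be evaluated in two ways.
In polar coordinates the integrand separates, and the radial factor
`∫ r ^ (n - i - 1) * (1 - exp (-r²)) dr = -Γ((n - i) / 2) / 2` converges exactly for
`n < i < n + 2`; subtracting `1` from the Gaussian is what continues `Γ` to the strip `(-1, 0)`.
On the other hand `q x ^ (-i / 2)` is a multiple of `∫ u ^ (i - 1) * exp (-q x * u²) du`, and after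
exchanging the integrals the inner one is a difference of two Gaussian integrals, namely the
bracket in the moment formula. The first half works for any star body.
-/

section MellinTransform

open Asymptotics Filter Topology

variable {p s : ℝ}

lemma one_sub_exp_neg_nonneg {t : ℝ} (ht : 0 ≤ t) : 0 ≤ 1 - exp (-t) :=
  sub_nonneg.2 (exp_le_one_iff.2 (neg_nonpos.2 ht))

lemma one_sub_exp_neg_le_self (t : ℝ) : 1 - exp (-t) ≤ t := by
  linarith [one_sub_le_exp_neg t]

lemma isBigO_one_sub_exp_neg_rpow_nhdsGT_zero :
    (fun x : ℝ ↦ 1 - exp (-x ^ p)) =O[𝓝[>] 0] (· ^ p) := by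
  refine .of_bound 1 (eventually_mem_nhdsWithin.mono fun x hx ↦ ?_)
  have hxp : 0 ≤ x ^ p := rpow_nonneg (le_of_lt hx) p
  rw [norm_of_nonneg (one_sub_exp_neg_nonneg hxp), norm_of_nonneg hxp, one_mul]
  exact one_sub_exp_neg_le_self _

lemma isBigO_one_sub_exp_neg_rpow_atTop :
    (fun x : ℝ ↦ 1 - exp (-x ^ p)) =O[atTop] (fun _ ↦ (1 : ℝ)) := by
  refine .of_bound 1 ((eventually_ge_atTop 0).mono fun x hx ↦ ?_)
  rw [norm_of_nonneg (one_sub_exp_neg_nonneg (rpow_nonneg hx p)), norm_one, one_mul]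
  exact sub_le_self _ (exp_pos _).le

lemma integrableOn_rpow_mul_one_sub_exp_neg_rpow (hs : -p < s) (hs' : s < 0) :
    IntegrableOn (fun x : ℝ ↦ x ^ (s - 1) * (1 - exp (-x ^ p))) (Ioi 0) := by
  have hcont : ContinuousOn (fun x : ℝ ↦ 1 - exp (-x ^ p)) (Ioi 0) := fun x hx ↦
    (continuousAt_const.sub
      (continuousAt_rpow_const x p (.inl hx.ne')).neg.rexp).continuousWithinAt
  refine mellin_convergent_of_isBigO_scalar (a := 0) (b := -p)
    (hcont.locallyIntegrableOn measurableSet_Ioi) ?_ hs' ?_ hs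
  · simpa only [neg_zero, rpow_zero] using isBigO_one_sub_exp_neg_rpow_atTop
  · simpa only [neg_neg] using isBigO_one_sub_exp_neg_rpow_nhdsGT_zero

lemma tendsto_rpow_mul_one_sub_exp_neg_rpow_nhdsGT_zero (hs : -p < s) :
    Tendsto (fun x : ℝ ↦ x ^ s * (1 - exp (-x ^ p))) (𝓝[>] 0) (𝓝 0) := by
  refine ((isBigO_refl _ _).mul isBigO_one_sub_exp_neg_rpow_nhdsGT_zero).trans_tendsto ?_
  have hsp : 0 < s + p := by linarith
  have hlim : Tendsto (fun x : ℝ ↦ x ^ (s + p)) (𝓝[>] 0) (𝓝 0) := by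
    simpa only [zero_rpow hsp.ne'] using
      (continuousAt_rpow_const 0 (s + p) (.inr hsp.le)).tendsto.mono_left nhdsWithin_le_nhds
  exact hlim.congr' (eventually_mem_nhdsWithin.mono fun x hx ↦ rpow_add hx s p)

lemma tendsto_rpow_mul_one_sub_exp_neg_rpow_atTop (hs : s < 0) :
    Tendsto (fun x : ℝ ↦ x ^ s * (1 - exp (-x ^ p))) atTop (𝓝 0) := by
  refine ((isBigO_refl _ _).mul isBigO_one_sub_exp_neg_rpow_atTop).trans_tendsto ?_
  simpa only [mul_one, neg_neg] using tendsto_rpow_neg_atTop (neg_pos.2 hs)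

lemma integral_rpow_mul_one_sub_exp_neg_rpow (hs : -p < s) (hs' : s < 0) :
    ∫ x in Ioi (0 : ℝ), x ^ (s - 1) * (1 - exp (-x ^ p)) = -(1 / p * Gamma (s / p)) := by
  have hp : 0 < p := by linarith
  have hderiv_rpow : ∀ x ∈ Ioi (0 : ℝ), HasDerivAt (· ^ s) (s * x ^ (s - 1)) x :=
    fun x hx ↦ hasDerivAt_rpow_const (.inl hx.ne')
  have hderiv_exp : ∀ x ∈ Ioi (0 : ℝ),
      HasDerivAt (fun x ↦ 1 - exp (-x ^ p)) (p * x ^ (p - 1) * exp (-x ^ p)) x := fun x hx ↦ by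
    convert! (hasDerivAt_rpow_const (.inl hx.ne')).fun_neg.exp.const_sub 1 using 1
    ring
  have hmul : EqOn (fun x : ℝ ↦ x ^ s * (p * x ^ (p - 1) * exp (-x ^ p)))
      (fun x ↦ p * (x ^ (s + p - 1) * exp (-x ^ p))) (Ioi 0) := fun x hx ↦ by
    simp only [add_sub_assoc, rpow_add hx]
    ring
  have hint : IntegrableOn (fun x : ℝ ↦ p * (x ^ (s + p - 1) * exp (-x ^ p))) (Ioi 0) :=
    (integrableOn_rpow_mul_exp_neg_rpow (by linarith) hp).const_mul p
  have hparts := integral_Ioi_mul_deriv_eq_deriv_mul hderiv_rpow hderiv_exp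
    (hint.congr_fun hmul.symm measurableSet_Ioi)
    (by simpa only [IntegrableOn, Pi.mul_def, mul_assoc] using
      (integrableOn_rpow_mul_one_sub_exp_neg_rpow hs hs').const_mul s)
    (tendsto_rpow_mul_one_sub_exp_neg_rpow_nhdsGT_zero hs)
    (tendsto_rpow_mul_one_sub_exp_neg_rpow_atTop hs')
  simp only [mul_assoc s, integral_const_mul] at hparts
  rw [setIntegral_congr_fun measurableSet_Ioi hmul, integral_const_mul,
    integral_rpow_mul_exp_neg_rpow hp (by linarith), sub_add_cancel, add_div, div_self hp.ne',
    Gamma_add_one (div_ne_zero hs'.ne hp.ne')] at hparts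
  refine mul_left_cancel₀ hs'.ne ?_
  rw [← mul_assoc p, mul_one_div_cancel hp.ne', one_mul] at hparts
  linear_combination hparts

lemma integral_rpow_mul_integral_mul_exp_neg_mul_rpow {α : Type*} [MeasurableSpace α]
    {μ : Measure α} [SFinite μ] {f q : α → ℝ} (hp : 0 < p) (hs : 0 < s)
    (hf : AEStronglyMeasurable f μ) (hq : AEMeasurable q μ) (hq_pos : ∀ᵐ x ∂μ, 0 < q x)
    (hfq : Integrable (fun x ↦ f x * q x ^ (-s / p)) μ) :
    ∫ u in Ioi (0 : ℝ), u ^ (s - 1) * ∫ x, f x * exp (-q x * u ^ p) ∂μ =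
      1 / p * Gamma (s / p) * ∫ x, f x * q x ^ (-s / p) ∂μ := by
  have hinner : ∀ (c : ℝ) {b : ℝ}, 0 < b →
      ∫ u in Ioi (0 : ℝ), u ^ (s - 1) * (c * exp (-b * u ^ p)) =
        1 / p * Gamma (s / p) * (c * b ^ (-s / p)) := fun c b hb ↦ by
    simp only [mul_left_comm _ c]
    rw [integral_const_mul, integral_rpow_mul_exp_neg_mul_rpow hp (by linarith) hb,
      sub_add_cancel]
    ring
  have hint : Integrable (Function.uncurry fun x u ↦ u ^ (s - 1) * (f x * exp (-q x * u ^ p)))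
      (μ.prod (volume.restrict (Ioi 0))) := by
    refine (integrable_prod_iff ?_).2 ⟨?_, ?_⟩
    · have hpow (r : ℝ) : AEMeasurable (fun z : α × ℝ ↦ z.2 ^ r)
          (μ.prod (volume.restrict (Ioi 0))) := by fun_prop
      exact (hpow _).aestronglyMeasurable.mul
        (hf.comp_fst.mul (hq.comp_fst.neg.mul (hpow p)).exp.aestronglyMeasurable)
    · filter_upwards [hq_pos] with x hx
      simp only [Function.uncurry, mul_left_comm _ (f x)]
      exact (integrableOn_rpow_mul_exp_neg_mul_rpow (by linarith) hp hx).const_mul _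
    · refine (hfq.norm.const_mul (1 / p * Gamma (s / p))).congr ?_
      filter_upwards [hq_pos] with x hx
      rw [norm_mul, norm_of_nonneg (rpow_nonneg hx.le _), ← hinner _ hx]
      refine setIntegral_congr_fun measurableSet_Ioi fun u hu ↦ ?_
      simp only [Function.uncurry, norm_mul, norm_of_nonneg (rpow_nonneg (le_of_lt hu) _),
        norm_of_nonneg (exp_pos _).le]
  simp only [← integral_const_mul]
  rw [← integral_integral_swap hint]
  refine integral_congr_ae ?_
  filter_upwards [hq_pos] with x hx using hinner _ hx

end MellinTransform

section PolarCoordinates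

open Metric Module

lemma eqOn_rpow_sub_one_mul_pow_smul {d : ℕ} (hd : 0 < d) (s : ℝ) (g : ℝ → ℝ) :
    EqOn (fun r ↦ r ^ (d - s - 1) * g r) (fun r ↦ r ^ (d - 1) • (r ^ (-s) * g r)) (Ioi 0) :=
  fun r hr ↦ by
    simp only [smul_eq_mul]
    rw [← mul_assoc, ← rpow_natCast, ← rpow_add hr, Nat.cast_pred hd]
    congr 2
    ring

variable {E F : Type*} [NormedAddCommGroup E] [NormedSpace ℝ E] [MeasurableSpace E]
  [NormedAddCommGroup F] [NormedSpace ℝ F]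

lemma integrable_volumeIoiPow_iff {k : ℕ} {g : ℝ → F} :
    Integrable (fun r : Ioi (0 : ℝ) ↦ g r) (.volumeIoiPow k) ↔
      IntegrableOn (fun r ↦ r ^ k • g r) (Ioi 0) := by
  rw [Measure.volumeIoiPow, integrable_withDensity_iff_integrable_smul' (by fun_prop) (by simp),
    integrableOn_iff_comap_subtypeVal measurableSet_Ioi]
  refine integrable_congr (.of_forall fun ⟨r, hr⟩ ↦ ?_)
  simp [ENNReal.toReal_ofReal (pow_nonneg (le_of_lt hr) k)]

lemma integral_volumeIoiPow (k : ℕ) (g : ℝ → F) :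
    ∫ r : Ioi (0 : ℝ), g r ∂(.volumeIoiPow k) = ∫ r in Ioi (0 : ℝ), r ^ k • g r := by
  rw [Measure.volumeIoiPow, integral_withDensity_eq_integral_toReal_smul (by fun_prop) (by simp),
    ← integral_subtype_comap measurableSet_Ioi]
  refine integral_congr_ae (.of_forall fun ⟨r, hr⟩ ↦ ?_)
  simp only [ENNReal.toReal_ofReal (pow_nonneg (le_of_lt hr) k)]

lemma comp_smul_comp_homeomorphUnitSphereProd {E X : Type*} [NormedAddCommGroup E]
    [NormedSpace ℝ E] (G : E → X) :
    (fun z : sphere (0 : E) 1 × Ioi (0 : ℝ) ↦ G (z.2.1 • z.1.1)) ∘ homeomorphUnitSphereProd E =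
      G ∘ Subtype.val := by
  funext x
  simp [smul_smul, mul_inv_cancel₀ (norm_ne_zero_iff.2 x.2)]

variable [Nontrivial E] [FiniteDimensional ℝ E] [BorelSpace E] (μ : Measure E) [μ.IsAddHaarMeasure]

lemma integrable_iff_integrable_polar {F : Type*} [NormedAddCommGroup F] {G : E → F} :
    Integrable G μ ↔ Integrable (fun z : sphere (0 : E) 1 × Ioi (0 : ℝ) ↦ G (z.2.1 • z.1.1))
      (μ.toSphere.prod (.volumeIoiPow (finrank ℝ E - 1))) := by
  rw [← μ.measurePreserving_homeomorphUnitSphereProd.integrable_comp_emb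
      (Homeomorph.measurableEmbedding _), comp_smul_comp_homeomorphUnitSphereProd,
    ← integrableOn_iff_comap_subtypeVal (measurableSet_singleton _).compl, IntegrableOn,
    restrict_compl_singleton]

lemma integral_eq_integral_polar (G : E → F) :
    ∫ x, G x ∂μ = ∫ z : sphere (0 : E) 1 × Ioi (0 : ℝ), G (z.2.1 • z.1.1)
      ∂(μ.toSphere.prod (.volumeIoiPow (finrank ℝ E - 1))) := by
  rw [← μ.measurePreserving_homeomorphUnitSphereProd.integral_comp
    (Homeomorph.measurableEmbedding _)]
  calc ∫ x, G x ∂μ = ∫ x : ({0}ᶜ : Set E), G x ∂μ.comap (↑) := by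
        rw [integral_subtype_comap (measurableSet_singleton _).compl, restrict_compl_singleton]
    _ = _ := congrArg (integral _) (comp_smul_comp_homeomorphUnitSphereProd G).symm

variable {G : E → F} {f : sphere (0 : E) 1 → ℝ} {g : ℝ → F}

lemma integrable_of_polar_eq_smul (hf : Integrable f μ.toSphere)
    (hg : IntegrableOn (fun r ↦ r ^ (finrank ℝ E - 1) • g r) (Ioi 0))
    (hG : ∀ θ : sphere (0 : E) 1, ∀ r : ℝ, 0 < r → G (r • θ.1) = f θ • g r) :
    Integrable G μ :=
  (integrable_iff_integrable_polar μ).2 <|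
    (hf.smul_prod (integrable_volumeIoiPow_iff.2 hg)).congr
      (.of_forall fun z ↦ (hG z.1 z.2 z.2.2).symm)

lemma integral_of_polar_eq_smul
    (hG : ∀ θ : sphere (0 : E) 1, ∀ r : ℝ, 0 < r → G (r • θ.1) = f θ • g r) :
    ∫ x, G x ∂μ =
      (∫ θ, f θ ∂μ.toSphere) • ∫ r in Ioi (0 : ℝ), r ^ (finrank ℝ E - 1) • g r := by
  rw [integral_eq_integral_polar, ← integral_volumeIoiPow, ← integral_prod_smul]
  exact integral_congr_ae (.of_forall fun z ↦ hG z.1 z.2 z.2.2)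

end PolarCoordinates

section HomogeneousGauge

open Filter Metric Module

variable {E : Type*} [NormedAddCommGroup E] [NormedSpace ℝ E]

/-- A gauge of degree `p` for the star body `{x | q x ≤ 1}`; every star body with continuous radial
function `ρ` arises from `q = ρ ^ (-p)`, extended by `0` to the origin. Leaving `p` free lets an
ellipsoid be represented by its quadratic form, without a square root. -/
structure IsHomogeneousGauge (p : ℝ) (q : E → ℝ) : Prop where
  continuous : Continuous q
  pos : ∀ {x}, x ≠ 0 → 0 < q x
  map_smul : ∀ {t : ℝ}, 0 ≤ t → ∀ x, q (t • x) = t ^ p * q x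

namespace IsHomogeneousGauge

variable {p s : ℝ} {q : E → ℝ} {g : ℝ → ℝ}

lemma rpow_smul (hq : IsHomogeneousGauge p q) (hp : p ≠ 0) {t : ℝ} (ht : 0 ≤ t) {x : E}
    (hx : x ≠ 0) : q (t • x) ^ (-s / p) = t ^ (-s) * q x ^ (-s / p) := by
  rw [hq.map_smul ht, mul_rpow (rpow_nonneg ht p) (hq.pos hx).le, ← rpow_mul ht,
    mul_div_cancel₀ _ hp]

lemma comp_norm_mul_rpow_polar (hq : IsHomogeneousGauge p q) (hp : p ≠ 0)
    (θ : sphere (0 : E) 1) (r : ℝ) (hr : 0 < r) :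
    g ‖r • θ.1‖ * q (r • θ.1) ^ (-s / p) = q θ ^ (-s / p) • (r ^ (-s) * g r) := by
  rw [hq.rpow_smul hp hr.le (ne_zero_of_mem_unit_sphere θ), norm_smul, norm_of_nonneg hr.le,
    norm_eq_of_mem_sphere, mul_one, smul_eq_mul]
  ring

variable [MeasurableSpace E] [BorelSpace E] [FiniteDimensional ℝ E] {μ : Measure E}
  [μ.IsAddHaarMeasure]

lemma integrable_rpow_sphere (hq : IsHomogeneousGauge p q) (r : ℝ) :
    Integrable (fun θ : sphere (0 : E) 1 ↦ q θ ^ r) μ.toSphere := by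
  have hcont : Continuous fun θ : sphere (0 : E) 1 ↦ q θ ^ r :=
    (hq.continuous.comp continuous_subtype_val).rpow_const fun θ ↦
      .inl (hq.pos (ne_zero_of_mem_unit_sphere θ)).ne'
  exact hcont.integrable_of_hasCompactSupport (.of_compactSpace _)

variable [Nontrivial E]

lemma integrable_comp_norm_mul_rpow (hq : IsHomogeneousGauge p q) (hp : p ≠ 0)
    (hg : IntegrableOn (fun r ↦ r ^ (finrank ℝ E - s - 1) * g r) (Ioi 0)) :
    Integrable (fun x ↦ g ‖x‖ * q x ^ (-s / p)) μ :=
  integrable_of_polar_eq_smul μ (hq.integrable_rpow_sphere _)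
    (hg.congr_fun (eqOn_rpow_sub_one_mul_pow_smul finrank_pos s g) measurableSet_Ioi)
    (hq.comp_norm_mul_rpow_polar hp)

lemma integral_comp_norm_mul_rpow (hq : IsHomogeneousGauge p q) (hp : p ≠ 0) (s : ℝ)
    (g : ℝ → ℝ) :
    ∫ x, g ‖x‖ * q x ^ (-s / p) ∂μ =
      (∫ θ : sphere (0 : E) 1, q θ ^ (-s / p) ∂μ.toSphere) *
        ∫ r in Ioi (0 : ℝ), r ^ (finrank ℝ E - s - 1) * g r := by
  rw [setIntegral_congr_fun measurableSet_Ioi (eqOn_rpow_sub_one_mul_pow_smul finrank_pos s g)]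
  exact integral_of_polar_eq_smul μ (hq.comp_norm_mul_rpow_polar hp)

lemma integral_rpow_mul_integral_one_sub_exp_mul_exp (hq : IsHomogeneousGauge p q)
    (hs : finrank ℝ E < s) (hs' : s < finrank ℝ E + p) :
    ∫ u in Ioi (0 : ℝ), u ^ (s - 1) * ∫ x, (1 - exp (-‖x‖ ^ p)) * exp (-q x * u ^ p) ∂μ =
      -(1 / p ^ 2 * Gamma ((finrank ℝ E - s) / p) * Gamma (s / p)) *
        ∫ θ : sphere (0 : E) 1, q θ ^ (-s / p) ∂μ.toSphere := by
  have hp : 0 < p := by linarith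
  have hs₀ : 0 < s := (Nat.cast_nonneg _).trans_lt hs
  have hg := integrableOn_rpow_mul_one_sub_exp_neg_rpow (p := p) (s := finrank ℝ E - s)
    (by linarith) (by linarith)
  have hmeas : Measurable fun x : E ↦ 1 - exp (-‖x‖ ^ p) := by fun_prop
  have hpos : ∀ᵐ x ∂μ, 0 < q x :=
    mem_of_superset (compl_mem_ae_iff.2 (measure_singleton 0)) fun _ ↦ hq.pos
  rw [integral_rpow_mul_integral_mul_exp_neg_mul_rpow hp hs₀ hmeas.aestronglyMeasurable
      hq.continuous.aemeasurable hpos (hq.integrable_comp_norm_mul_rpow hp.ne' hg),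
    hq.integral_comp_norm_mul_rpow hp.ne' s fun r ↦ 1 - exp (-r ^ p),
    integral_rpow_mul_one_sub_exp_neg_rpow (by linarith) (by linarith)]
  ring

end IsHomogeneousGauge

end HomogeneousGauge

section DualVolume

variable {n : ℕ} {p s : ℝ} {q : EuclideanSpace ℝ (Fin n) → ℝ}

lemma radial_setOf_le_one (hq : IsHomogeneousGauge p q) (hp : 0 < p)
    {x : EuclideanSpace ℝ (Fin n)} (hx : x ≠ 0) :
    radial {y | q y ≤ 1} x = q x ^ (-p⁻¹) := by
  have hqx := hq.pos hx
  have hIcc : {t : ℝ | 0 ≤ t ∧ t • x ∈ {y | q y ≤ 1}} = Icc 0 (q x ^ (-p⁻¹)) := by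
    ext t
    refine and_congr_right fun ht ↦ ?_
    rw [rpow_neg hqx.le, ← inv_rpow hqx.le, le_rpow_inv_iff_of_pos ht (inv_nonneg.2 hqx.le) hp,
      ← one_div, le_div_iff₀ hqx, ← hq.map_smul ht]
    rfl
  rw [radial, hIcc, csSup_Icc (rpow_nonneg hqx.le _)]

lemma dualVolume_setOf_le_one (hq : IsHomogeneousGauge p q) (hp : 0 < p) (s : ℝ) :
    dualVolume n s {x | q x ≤ 1} =
      1 / n * ∫ θ : Metric.sphere (0 : EuclideanSpace ℝ (Fin n)) 1, q θ ^ (-s / p)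
        ∂volume.toSphere := by
  refine congrArg (1 / (n : ℝ) * ·) (integral_congr_ae (.of_forall fun θ ↦ ?_))
  have hθ := ne_zero_of_mem_unit_sphere θ
  simp only
  rw [radial_setOf_le_one hq hp hθ, ← rpow_mul (hq.pos hθ).le]
  congr 1
  ring

lemma Gamma_ne_zero_of_neg_one_lt_of_neg {z : ℝ} (hz : -1 < z) (hz' : z < 0) : Gamma z ≠ 0 := by
  have hpos : 0 < z * Gamma z := by
    rw [← Gamma_add_one hz'.ne]
    exact Gamma_pos_of_pos (by linarith)
  exact right_ne_zero_of_mul hpos.ne'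

lemma dualVolume_setOf_le_one_eq_integral_rpow_mul (hn : 0 < n) (hq : IsHomogeneousGauge p q)
    (hs : n < s) (hs' : s < n + p) :
    dualVolume n s {x | q x ≤ 1} =
      -(p ^ 2 / (n * Gamma ((n - s) / p) * Gamma (s / p))) *
        ∫ u in Ioi (0 : ℝ), u ^ (s - 1) *
          ∫ x : EuclideanSpace ℝ (Fin n), (1 - exp (-‖x‖ ^ p)) * exp (-q x * u ^ p) := by
  have : Nonempty (Fin n) := ⟨⟨0, hn⟩⟩
  have hp : 0 < p := by linarith
  have hs₀ : 0 < s := (Nat.cast_nonneg n).trans_lt hs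
  have hΓ : Gamma (s / p) ≠ 0 := (Gamma_pos_of_pos (div_pos hs₀ hp)).ne'
  have hΓ' : Gamma ((n - s) / p) ≠ 0 :=
    Gamma_ne_zero_of_neg_one_lt_of_neg (by rw [lt_div_iff₀ hp]; linarith)
      (div_neg_of_neg_of_pos (by linarith) hp)
  have hmoment := hq.integral_rpow_mul_integral_one_sub_exp_mul_exp (μ := volume) (s := s)
    (by rwa [finrank_euclideanSpace_fin]) (by rwa [finrank_euclideanSpace_fin])
  rw [finrank_euclideanSpace_fin] at hmoment
  rw [dualVolume_setOf_le_one hq hp, hmoment]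
  field_simp

end DualVolume

section DiagonalForm

variable {ι : Type*} [Fintype ι] {b : ι → ℝ}

/-- The diagonal quadratic form with coefficients `b`, as a function on Euclidean space (whereas
`QuadraticMap.weightedSumSquares` lives on `ι → ℝ`). It serves both as the exponent of a Gaussian
and, with `b j = (a j ^ 2)⁻¹`, as the gauge of an ellipsoid. -/
noncomputable def diagForm (b : ι → ℝ) (x : EuclideanSpace ℝ ι) : ℝ :=
  ∑ j, b j * x j ^ 2

lemma isHomogeneousGauge_diagForm (hb : ∀ j, 0 < b j) : IsHomogeneousGauge 2 (diagForm b) where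
  continuous := by unfold diagForm; fun_prop
  pos {x} hx := by
    obtain ⟨j, hj⟩ : ∃ j, x j ≠ 0 := by
      contrapose! hx
      exact PiLp.ext hx
    exact Finset.sum_pos' (fun k _ ↦ mul_nonneg (hb k).le (sq_nonneg _))
      ⟨j, Finset.mem_univ j, mul_pos (hb j) (sq_pos_of_ne_zero hj)⟩
  map_smul {t} _ x := by
    simp only [diagForm, PiLp.smul_apply, smul_eq_mul, mul_pow, rpow_two, Finset.mul_sum,
      mul_left_comm]

lemma diagForm_mul_left (c : ℝ) (b : ι → ℝ) (x : EuclideanSpace ℝ ι) :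
    diagForm (fun j ↦ c * b j) x = c * diagForm b x := by
  simp only [diagForm, mul_assoc, Finset.mul_sum]

lemma diagForm_one_add (b : ι → ℝ) (x : EuclideanSpace ℝ ι) :
    diagForm (fun j ↦ 1 + b j) x = ‖x‖ ^ 2 + diagForm b x := by
  simp only [diagForm, add_mul, one_mul, Finset.sum_add_distrib, EuclideanSpace.real_norm_sq_eq]

lemma exp_neg_diagForm_toLp (b x : ι → ℝ) :
    exp (-diagForm b (WithLp.toLp 2 x)) = ∏ j, exp (-b j * x j ^ 2) := by
  simp only [diagForm, ← exp_sum, ← Finset.sum_neg_distrib, neg_mul]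

lemma integrable_exp_neg_diagForm (hb : ∀ j, 0 < b j) :
    Integrable fun x ↦ exp (-diagForm b x) := by
  rw [← (PiLp.volume_preserving_toLp ι).integrable_comp_emb
    (MeasurableEquiv.toLp 2 _).measurableEmbedding]
  simp only [Function.comp_def, exp_neg_diagForm_toLp]
  exact Integrable.fintype_prod fun j ↦ integrable_exp_neg_mul_sq (hb j)

lemma integral_exp_neg_diagForm (hb : ∀ j, 0 < b j) :
    ∫ x, exp (-diagForm b x) =
      π ^ ((Fintype.card ι : ℝ) / 2) * (∏ j, b j) ^ (-(1 : ℝ) / 2) := by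
  have hsqrt : ∀ j, √(π / b j) = √π * b j ^ (-(1 : ℝ) / 2) := fun j ↦ by
    rw [sqrt_div pi_pos.le, neg_div, rpow_neg (hb j).le, ← sqrt_eq_rpow, div_eq_mul_inv]
  have hpi : √π ^ Fintype.card ι = π ^ ((Fintype.card ι : ℝ) / 2) := by
    rw [sqrt_eq_rpow, ← rpow_natCast, ← rpow_mul pi_pos.le]
    congr 1
    ring
  rw [← (PiLp.volume_preserving_toLp ι).integral_comp
    (MeasurableEquiv.toLp 2 _).measurableEmbedding]
  simp only [exp_neg_diagForm_toLp]
  rw [integral_fintype_prod_volume_eq_prod fun j (t : ℝ) ↦ exp (-b j * t ^ 2)]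
  simp only [integral_gaussian, hsqrt, Finset.prod_mul_distrib, Finset.prod_const,
    Finset.card_univ, hpi, finsetProd_rpow _ _ fun j _ ↦ (hb j).le]

lemma integral_one_sub_exp_neg_norm_sq_mul_exp_neg_diagForm (hb : ∀ j, 0 < b j) :
    ∫ x : EuclideanSpace ℝ ι, (1 - exp (-‖x‖ ^ 2)) * exp (-diagForm b x) =
      -π ^ ((Fintype.card ι : ℝ) / 2) *
        ((∏ j, (1 + b j)) ^ (-(1 : ℝ) / 2) - (∏ j, b j) ^ (-(1 : ℝ) / 2)) := by
  have hb' : ∀ j, 0 < 1 + b j := fun j ↦ add_pos one_pos (hb j)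
  have hsub : ∀ x : EuclideanSpace ℝ ι, (1 - exp (-‖x‖ ^ 2)) * exp (-diagForm b x) =
      exp (-diagForm b x) - exp (-diagForm (fun j ↦ 1 + b j) x) := fun x ↦ by
    rw [diagForm_one_add, neg_add, exp_add]
    ring
  simp only [hsub]
  rw [integral_sub (integrable_exp_neg_diagForm hb) (integrable_exp_neg_diagForm hb'),
    integral_exp_neg_diagForm hb, integral_exp_neg_diagForm hb']
  ring

end DiagonalForm

section Ellipsoid

variable {n : ℕ} {a : Fin n → ℝ}

lemma ellipsoidSet_eq_setOf_diagForm_le_one (a : Fin n → ℝ) :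
    ellipsoidSet a = {x | diagForm (fun j ↦ (a j ^ 2)⁻¹) x ≤ 1} := by
  simp only [ellipsoidSet, diagForm, div_eq_inv_mul]

lemma prod_sq_div_sq_rpow_neg_half (ha : ∀ j, 0 < a j) {u : ℝ} (hu : 0 < u) :
    (∏ j, u ^ 2 / a j ^ 2) ^ (-(1 : ℝ) / 2) = (∏ j, a j) / u ^ n := by
  have hprod : ∏ j, u ^ 2 / a j ^ 2 = (u ^ n / ∏ j, a j) ^ 2 := by
    rw [Finset.prod_div_distrib, Finset.prod_const, Finset.card_univ, Fintype.card_fin,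
      Finset.prod_pow, div_pow, ← pow_mul, ← pow_mul, mul_comm]
  have hpos : 0 ≤ u ^ n / ∏ j, a j :=
    div_nonneg (pow_nonneg hu.le n) (Finset.prod_nonneg fun j _ ↦ (ha j).le)
  rw [hprod, neg_div, rpow_neg (sq_nonneg _), ← sqrt_eq_rpow, sqrt_sq hpos, inv_div]

lemma integral_one_sub_exp_neg_norm_sq_mul_exp_neg_ellipsoid (ha : ∀ j, 0 < a j) {u : ℝ}
    (hu : 0 < u) :
    ∫ x, (1 - exp (-‖x‖ ^ 2)) * exp (-diagForm (fun j ↦ (a j ^ 2)⁻¹) x * u ^ 2) =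
      -π ^ ((n : ℝ) / 2) *
        ((∏ j, (1 + u ^ 2 / a j ^ 2)) ^ (-(1 : ℝ) / 2) - (∏ j, a j) / u ^ n) := by
  have hb : ∀ j, 0 < u ^ 2 / a j ^ 2 := fun j ↦ div_pos (pow_pos hu 2) (pow_pos (ha j) 2)
  have hgauss := integral_one_sub_exp_neg_norm_sq_mul_exp_neg_diagForm hb
  rw [prod_sq_div_sq_rpow_neg_half ha hu, Fintype.card_fin] at hgauss
  simpa only [neg_mul, mul_comm (diagForm _ _) (u ^ 2), ← diagForm_mul_left, ← div_eq_mul_inv]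
    using hgauss

end Ellipsoid

/-- Moment representation of the dual volume `Ṽ_i` of a centered ellipsoid, for `n < i < n+2`.
Here `Real.Gamma` is the Gamma function extended to negative non-integer arguments by the
recursion `Γ(z) = Γ(z+1)/z`. -/
theorem dualVolume_moment_formula_large
    (n : ℕ) (hn : 0 < n) (a : Fin n → ℝ) (ha : ∀ j, 0 < a j)
    (i : ℝ) (hi0 : (n : ℝ) < i) (hin : i < (n : ℝ) + 2) :
    dualVolume n i (ellipsoidSet a) =
      4 * Real.pi ^ ((n : ℝ) / 2) /
          (n * Real.Gamma (((n : ℝ) - i) / 2) * Real.Gamma (i / 2)) *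
        ∫ u in Ioi (0 : ℝ),
          u ^ (i - 1) *
            ((∏ j, (1 + u ^ 2 / (a j) ^ 2)) ^ (-(1 : ℝ) / 2) - (∏ j, a j) / u ^ n) := by
  have hb : ∀ j, 0 < (a j ^ 2)⁻¹ := fun j ↦ inv_pos.2 (pow_pos (ha j) 2)
  have hmoment := dualVolume_setOf_le_one_eq_integral_rpow_mul hn
    (isHomogeneousGauge_diagForm hb) hi0 hin
  simp only [rpow_two] at hmoment
  rw [ellipsoidSet_eq_setOf_diagForm_le_one, hmoment, ← integral_const_mul, ← integral_const_mul]
  refine setIntegral_congr_fun measurableSet_Ioi fun u hu ↦ ?_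
  simp only [integral_one_sub_exp_neg_norm_sq_mul_exp_neg_ellipsoid ha hu]
  ring
end
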